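/- arXiv:1609.03793 — 6 statements merged into one kernel-verified Lean document; each statement's English description precedes it below -/
import Mathlib

section
/- Let s ∈ (1,∞) and q ∈ [1,s] be real numbers. Let (w_n) be a sequence of measurable functions from ℝ^N to ℝ (N ≥ 1) such that sup_n ∫_{ℝ^N} |w_n|^s dx < ∞, and suppose w_n converges almost everywhere on ℝ^N to a measurable function w. Then lim_{n→∞} ∫_{ℝ^N} | |w_n|^q − |w_n − w|^q − |w|^q |^{s/q} dx = 0. -/
open MeasureTheory Filter Topology

noncomputable def blF (q p a b : ℝ) : ℝ := (|(|a + b| ^ q - |a| ^ q - |b| ^ q)|) ^ p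

lemma blF_cont {q p : ℝ} (hq : 0 ≤ q) (hp : 0 ≤ p) {f g : ℝ → ℝ} (hf : Continuous f)
    (hg : Continuous g) : Continuous (fun t => blF q p (f t) (g t)) := by
  unfold blF
  refine Continuous.rpow_const ?_ (fun _ => Or.inr hp)
  refine Continuous.abs (Continuous.sub (Continuous.sub ?_ ?_) ?_)
  · exact (hf.add hg).abs.rpow_const (fun _ => Or.inr hq)
  · exact hf.abs.rpow_const (fun _ => Or.inr hq)
  · exact hg.abs.rpow_const (fun _ => Or.inr hq)

lemma blF_hom (q p c a b : ℝ) :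
    blF q p (c * a) (c * b) = |c| ^ (q * p) * blF q p a b := by
  unfold blF
  rw [← mul_add, abs_mul, abs_mul, abs_mul, Real.mul_rpow (abs_nonneg _) (abs_nonneg _),
    Real.mul_rpow (abs_nonneg _) (abs_nonneg _), Real.mul_rpow (abs_nonneg _) (abs_nonneg _),
    ← mul_sub, ← mul_sub, abs_mul, Real.mul_rpow (abs_nonneg _) (abs_nonneg _),
    Real.rpow_mul (abs_nonneg _), abs_of_nonneg (Real.rpow_nonneg (abs_nonneg c) q)]

lemma blF_bound {q p : ℝ} (hq : 0 < q) (hp : 0 < p) {ε : ℝ} (hε : 0 < ε) :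
    ∃ C : ℝ, 0 ≤ C ∧ ∀ a b, blF q p a b ≤ ε * |a| ^ (q * p) + C * |b| ^ (q * p) := by
  have h0 : blF q p 1 0 = 0 := by
    simp [blF, Real.zero_rpow hq.ne', Real.zero_rpow hp.ne']
  have h00 : blF q p 0 0 = 0 := by
    simp [blF, Real.zero_rpow hq.ne', Real.zero_rpow hp.ne']
  have hc1 : Continuous (fun t => blF q p 1 t) := blF_cont hq.le hp.le continuous_const continuous_id
  have hc2 : Continuous (fun t => blF q p t 1) := blF_cont hq.le hp.le continuous_id continuous_const
  have hev : ∀ᶠ t in 𝓝 (0:ℝ), blF q p 1 t < ε := by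
    apply hc1.continuousAt.eventually_lt continuousAt_const
    simpa [h0] using hε
  obtain ⟨η, hη, hη'⟩ := Metric.eventually_nhds_iff.1 hev
  obtain ⟨C, hC⟩ := (isCompact_Icc (a := -(1/η)) (b := 1/η)).bddAbove_image hc2.continuousOn
  have hC' : ∀ t, |t| ≤ 1/η → blF q p t 1 ≤ C := fun t ht =>
    hC (Set.mem_image_of_mem _ (abs_le.1 ht))
  refine ⟨max C 0, le_max_right _ _, fun a b => ?_⟩
  have e1 : 0 ≤ ε * |a| ^ (q * p) := mul_nonneg hε.le (Real.rpow_nonneg (abs_nonneg _) _)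
  have e2 : 0 ≤ max C 0 * |b| ^ (q * p) :=
    mul_nonneg (le_max_right _ _) (Real.rpow_nonneg (abs_nonneg _) _)
  by_cases hab : |b| < η * |a|
  · have ha : a ≠ 0 := by
      rintro rfl
      simp at hab
      exact absurd hab (not_lt.2 (abs_nonneg _))
    have := blF_hom q p a 1 (b / a)
    rw [mul_one, mul_div_cancel₀ _ ha] at this
    have h2 : blF q p 1 (b / a) < ε := by
      apply hη'
      rw [Real.dist_eq, sub_zero, abs_div, div_lt_iff₀ (abs_pos.2 ha)]
      exact hab
    rw [this]
    nlinarith [Real.rpow_nonneg (abs_nonneg a) (q * p)]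
  · push Not at hab
    by_cases hb : b = 0
    · subst hb
      have ha : a = 0 := by
        rw [abs_zero] at hab
        have := abs_nonneg a
        exact abs_eq_zero.1 (by nlinarith)
      subst ha
      rw [h00]
      linarith
    have := blF_hom q p b (a / b) 1
    rw [mul_one, mul_div_cancel₀ _ hb] at this
    have h2 : blF q p (a / b) 1 ≤ max C 0 := by
      refine (hC' _ ?_).trans (le_max_left _ _)
      rw [abs_div, div_le_div_iff₀ (abs_pos.2 hb) hη]
      linarith
    rw [this]
    nlinarith [Real.rpow_nonneg (abs_nonneg b) (q * p)]

lemma bl_sub (s a b : ℝ) (hs : 0 ≤ s) :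
    |a - b| ^ s ≤ 2 ^ s * (|a| ^ s + |b| ^ s) := by
  have h1 : |a - b| ≤ 2 * max |a| |b| := by
    have := abs_sub a b
    have := le_max_left |a| |b|
    have := le_max_right |a| |b|
    linarith
  have h2 := Real.rpow_le_rpow (abs_nonneg _) h1 hs
  rw [Real.mul_rpow (by norm_num) (le_max_of_le_left (abs_nonneg _))] at h2
  refine h2.trans (mul_le_mul_of_nonneg_left ?_ (by positivity))
  have ha := Real.rpow_nonneg (abs_nonneg a) s
  have hb := Real.rpow_nonneg (abs_nonneg b) s
  rcases max_choice |a| |b| with h | h <;> rw [h] <;> linarith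

/-- Local Brezis–Lieb lemma, first identity (Lemma 3.3 of the paper). -/
theorem local_brezis_lieb_first
    (N : ℕ) (hN : 1 ≤ N) (s q : ℝ) (hs : 1 < s) (hq1 : 1 ≤ q) (hqs : q ≤ s)
    (w : ℕ → EuclideanSpace ℝ (Fin N) → ℝ) (wlim : EuclideanSpace ℝ (Fin N) → ℝ)
    (hmeas : ∀ n, Measurable (w n)) (hwmeas : Measurable wlim)
    (hbound : ∃ C : ℝ, ∀ n,
      ∫⁻ x, ENNReal.ofReal (|w n x| ^ s) ∂volume ≤ ENNReal.ofReal C)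
    (hae : ∀ᵐ x ∂(volume : Measure (EuclideanSpace ℝ (Fin N))),
      Tendsto (fun n => w n x) atTop (𝓝 (wlim x))) :
    Tendsto (fun n =>
        ∫⁻ x, ENNReal.ofReal
          ((|(|w n x| ^ q - |w n x - wlim x| ^ q - |wlim x| ^ q)|) ^ (s / q)) ∂volume)
      atTop (𝓝 0) := by
  obtain ⟨K, hK⟩ := hbound
  have hq : 0 < q := by linarith
  have hs0 : 0 < s := by linarith
  have hp : 0 < s / q := by positivity
  have hqp : q * (s / q) = s := mul_div_cancel₀ _ hq.ne'
  have hpow : Continuous (fun t : ℝ => ENNReal.ofReal (|t| ^ s)) :=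
    ENNReal.continuous_ofReal.comp (continuous_abs.rpow_const (fun _ => Or.inr hs0.le))
  -- Fatou
  have hlim : ∫⁻ x, ENNReal.ofReal (|wlim x| ^ s) ≤ ENNReal.ofReal K := by
    calc ∫⁻ x, ENNReal.ofReal (|wlim x| ^ s)
        = ∫⁻ x, liminf (fun n => ENNReal.ofReal (|w n x| ^ s)) atTop := by
          apply lintegral_congr_ae
          filter_upwards [hae] with x hx
          exact (((hpow.tendsto _).comp hx).liminf_eq).symm
      _ ≤ liminf (fun n => ∫⁻ x, ENNReal.ofReal (|w n x| ^ s)) atTop :=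
          lintegral_liminf_le (fun n => hpow.measurable.comp (hmeas n))
      _ ≤ ENNReal.ofReal K := by
          refine liminf_le_of_le (by isBoundedDefault) fun b hb => ?_
          obtain ⟨n, hn⟩ := hb.exists
          exact hn.trans (hK n)
  set v : ℕ → EuclideanSpace ℝ (Fin N) → ENNReal :=
    fun n x => ENNReal.ofReal (|w n x - wlim x| ^ s) with hv
  have hvm : ∀ n, Measurable (v n) := fun n => hpow.measurable.comp ((hmeas n).sub hwmeas)
  set M : ENNReal := ENNReal.ofReal (2 ^ s) * (ENNReal.ofReal K + ENNReal.ofReal K) with hM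
  have hMtop : M ≠ ⊤ := by simp [hM, ENNReal.mul_eq_top]
  have hvM : ∀ n, ∫⁻ x, v n x ≤ M := by
    intro n
    calc ∫⁻ x, v n x ≤ ∫⁻ x, ENNReal.ofReal (2 ^ s) *
          (ENNReal.ofReal (|w n x| ^ s) + ENNReal.ofReal (|wlim x| ^ s)) := by
          apply lintegral_mono
          intro x
          beta_reduce
          rw [← ENNReal.ofReal_add (by positivity) (by positivity),
            ← ENNReal.ofReal_mul (by positivity)]
          exact ENNReal.ofReal_le_ofReal (bl_sub s _ _ hs0.le)
      _ = ENNReal.ofReal (2 ^ s) * (∫⁻ x, ENNReal.ofReal (|w n x| ^ s) +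
            ENNReal.ofReal (|wlim x| ^ s)) :=
          lintegral_const_mul' _ _ ENNReal.ofReal_ne_top
      _ = ENNReal.ofReal (2 ^ s) * ((∫⁻ x, ENNReal.ofReal (|w n x| ^ s)) +
            ∫⁻ x, ENNReal.ofReal (|wlim x| ^ s)) := by
          congr 1
          exact lintegral_add_left (hpow.measurable.comp (hmeas n)) _
      _ ≤ M := by
          rw [hM]
          gcongr
          exact hK n
  set g : ℕ → EuclideanSpace ℝ (Fin N) → ENNReal := fun n x => ENNReal.ofReal
          ((|(|w n x| ^ q - |w n x - wlim x| ^ q - |wlim x| ^ q)|) ^ (s / q)) with hg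
  have hgF : ∀ n x, g n x = ENNReal.ofReal (blF q (s / q) (w n x - wlim x) (wlim x)) := by
    intro n x
    simp [hg, blF]
  have hgm : ∀ n, Measurable (g n) := by
    intro n
    have h1 := hmeas n
    simp only [hg]
    fun_prop
  have hg0 : ∀ᵐ x ∂(volume : Measure (EuclideanSpace ℝ (Fin N))),
      Tendsto (fun n => g n x) atTop (𝓝 0) := by
    filter_upwards [hae] with x hx
    have hc : Continuous (fun t => blF q (s / q) (t - wlim x) (wlim x)) :=
      blF_cont hq.le hp.le (continuous_id.sub continuous_const) continuous_const
    have := ((ENNReal.continuous_ofReal.comp hc).tendsto (wlim x)).comp hx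
    have h0 : blF q (s / q) (wlim x - wlim x) (wlim x) = 0 := by
      simp [blF, Real.zero_rpow hq.ne', Real.zero_rpow hp.ne']
    simp only [Function.comp_def, h0, ENNReal.ofReal_zero] at this
    simpa only [hgF] using this
  change Tendsto (fun n => ∫⁻ x, g n x) atTop (𝓝 0)
  rw [ENNReal.tendsto_nhds_zero]
  intro e he
  have he2 : e / 2 ≠ 0 := (ENNReal.half_pos he.ne').ne'
  obtain ⟨ε, hε, hεM⟩ := ENNReal.exists_nnreal_pos_mul_lt hMtop he2
  obtain ⟨C, hC0, hC⟩ := blF_bound hq hp (ε := (ε : ℝ)) (by exact_mod_cast hε)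
  have hdom : Tendsto (fun n => ∫⁻ x, (g n x - ε * v n x)) atTop
      (𝓝 (∫⁻ _ : EuclideanSpace ℝ (Fin N), 0)) := by
    apply tendsto_lintegral_of_dominated_convergence
      (fun x => ENNReal.ofReal C * ENNReal.ofReal (|wlim x| ^ s))
    · intro n
      exact (hgm n).sub ((hvm n).const_mul _)
    · intro n
      refine Eventually.of_forall fun x => ?_
      change g n x - ε * v n x ≤ ENNReal.ofReal C * ENNReal.ofReal (|wlim x| ^ s)
      rw [tsub_le_iff_left, hgF, hv, ← ENNReal.ofReal_coe_nnreal,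
        ← ENNReal.ofReal_mul (by positivity), ← ENNReal.ofReal_mul hC0,
        ← ENNReal.ofReal_add (by positivity) (by positivity)]
      apply ENNReal.ofReal_le_ofReal
      have := hC (w n x - wlim x) (wlim x)
      rwa [hqp] at this
    · rw [lintegral_const_mul' _ _ ENNReal.ofReal_ne_top]
      exact ENNReal.mul_ne_top ENNReal.ofReal_ne_top (ne_top_of_le_ne_top ENNReal.ofReal_ne_top hlim)
    · filter_upwards [hg0] with x hx
      exact tendsto_of_tendsto_of_tendsto_of_le_of_le tendsto_const_nhds hx
        (fun _ => zero_le) (fun _ => tsub_le_self)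
  rw [lintegral_zero, ENNReal.tendsto_nhds_zero] at hdom
  filter_upwards [hdom (e / 2) (pos_iff_ne_zero.2 he2)] with n hn
  calc ∫⁻ x, g n x ≤ ∫⁻ x, (ε * v n x + (g n x - ε * v n x)) :=
        lintegral_mono fun x => le_add_tsub
    _ = ε * (∫⁻ x, v n x) + ∫⁻ x, (g n x - ε * v n x) := by
        rw [lintegral_add_left ((hvm n).const_mul _), lintegral_const_mul' _ _ ENNReal.coe_ne_top]
    _ ≤ ε * M + e / 2 := by
        gcongr
        exact hvM n
    _ ≤ e / 2 + e / 2 := by gcongr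
    _ = e := ENNReal.add_halves e
end

section
/- Let s ∈ (1,∞) and q ∈ [1,s] be real numbers. Let (w_n) be a sequence of measurable functions from ℝ^N to ℝ (N ≥ 1) such that sup_n ∫_{ℝ^N} |w_n|^s dx < ∞, and suppose w_n converges almost everywhere on ℝ^N to a measurable function w. Then lim_{n→∞} ∫_{ℝ^N} | |w_n|^{q−1} w_n − |w_n − w|^{q−1} (w_n − w) − |w|^{q−1} w |^{s/q} dx = 0. -/
open MeasureTheory Filter Topology

lemma bl_phi_mul (q a b : ℝ) :
    |a * b| ^ (q - 1) * (a * b) = (|a| ^ (q - 1) * a) * (|b| ^ (q - 1) * b) := by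
  rw [abs_mul, Real.mul_rpow (abs_nonneg _) (abs_nonneg _)]; ring

lemma bl_phi_abs (q : ℝ) (hq : 1 ≤ q) (a : ℝ) : |(|a| ^ (q - 1) * a)| = |a| ^ q := by
  rw [abs_mul, abs_of_nonneg (Real.rpow_nonneg (abs_nonneg a) _)]
  rcases eq_or_ne a 0 with rfl | h
  · simp [Real.zero_rpow (by linarith : q ≠ 0)]
  · have := abs_pos.2 h
    nth_rewrite 2 [← Real.rpow_one |a|]
    rw [← Real.rpow_add this]; congr 1; ring

lemma bl_phi_cont (q : ℝ) (hq : 1 ≤ q) : Continuous (fun a : ℝ => |a| ^ (q - 1) * a) := by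
  refine Continuous.mul (Continuous.rpow_const continuous_abs fun x => Or.inr (by linarith)) continuous_id

lemma bl_pointwise (q : ℝ) (hq : 1 ≤ q) (η : ℝ) (hη : 0 < η) :
    ∃ K : ℝ, 0 ≤ K ∧ ∀ a b : ℝ,
      |(|a + b| ^ (q - 1) * (a + b) - |a| ^ (q - 1) * a - |b| ^ (q - 1) * b)| ≤ η * |a| ^ q ∨
      |(|a + b| ^ (q - 1) * (a + b) - |a| ^ (q - 1) * a - |b| ^ (q - 1) * b)| ≤ K * |b| ^ q := by
  have hc := bl_phi_cont q hq
  have habs := bl_phi_abs q hq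
  have hmul := bl_phi_mul q
  have h0 : |(0:ℝ)| ^ (q - 1) * 0 = 0 := by simp
  have h1 : |(1:ℝ)| ^ (q - 1) * 1 = 1 := by simp
  set φ : ℝ → ℝ := fun a => |a| ^ (q - 1) * a with hφ
  change φ 0 = 0 at h0
  change φ 1 = 1 at h1
  change ∀ a, |φ a| = |a| ^ q at habs
  change ∀ a b, φ (a * b) = φ a * φ b at hmul
  change ∃ K : ℝ, 0 ≤ K ∧ ∀ a b : ℝ, |φ (a + b) - φ a - φ b| ≤ η * |a| ^ q ∨
    |φ (a + b) - φ a - φ b| ≤ K * |b| ^ q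
  have hg : Continuous (fun t => φ (1 + t) - 1 - φ t) := by fun_prop
  obtain ⟨δ, hδ, hd⟩ := Metric.continuous_iff.1 hg 0 η hη
  refine ⟨(1 / δ + 1) ^ q + (1 / δ) ^ q + 1, by positivity, fun a b => ?_⟩
  rcases eq_or_ne a 0 with rfl | ha
  · left; simp [h0]; positivity
  obtain ⟨t, rfl⟩ : ∃ t, b = a * t := ⟨b / a, by field_simp⟩
  have e : φ (a + a * t) - φ a - φ (a * t) = φ a * (φ (1 + t) - 1 - φ t) := by
    rw [show a + a * t = a * (1 + t) by ring, hmul, hmul]; ring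
  have hap : 0 ≤ |a| ^ q := by positivity
  rw [e, abs_mul, habs, abs_mul, Real.mul_rpow (abs_nonneg _) (abs_nonneg _)]
  rcases lt_or_ge |t| δ with h | h
  · left
    have := hd t (by simpa [Real.dist_eq] using h)
    simp only [Real.dist_eq, add_zero, h0, h1] at this
    rw [mul_comm]
    gcongr
    simpa using this.le
  · right
    have ht : 1 ≤ 1 / δ * |t| := by rw [div_mul_eq_mul_div, one_mul, le_div_iff₀ hδ]; linarith
    have hA : |φ (1 + t)| ≤ (1 / δ + 1) ^ q * |t| ^ q := by
      rw [habs, ← Real.mul_rpow (by positivity) (by positivity)]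
      refine Real.rpow_le_rpow (abs_nonneg _) ?_ (by linarith)
      have := abs_add_le 1 t
      rw [abs_one] at this
      linarith
    have hB : 1 ≤ (1 / δ) ^ q * |t| ^ q := by
      rw [← Real.mul_rpow (by positivity) (by positivity)]
      exact Real.one_le_rpow ht (by linarith)
    have hC : |φ (1 + t) - 1 - φ t| ≤ ((1 / δ + 1) ^ q + (1 / δ) ^ q + 1) * |t| ^ q := by
      have h3 := abs_sub (φ (1 + t) - 1) (φ t)
      have h4 := abs_sub (φ (1 + t)) 1
      rw [abs_one] at h4
      rw [habs t] at h3
      linarith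
    calc _ ≤ |a| ^ q * (((1 / δ + 1) ^ q + (1 / δ) ^ q + 1) * |t| ^ q) := by gcongr
      _ = _ := by ring

lemma bl_pointwise_pow (s q : ℝ) (hq : 1 ≤ q) (hqs : q ≤ s) (ε : ℝ) (hε : 0 < ε) :
    ∃ K : ℝ, 0 ≤ K ∧ ∀ a b : ℝ,
      |(|a + b| ^ (q - 1) * (a + b) - |a| ^ (q - 1) * a - |b| ^ (q - 1) * b)| ^ (s / q)
        ≤ ε * |a| ^ s + K * |b| ^ s := by
  have hq0 : 0 < q := by linarith
  have hs0 : 0 < s := by linarith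
  obtain ⟨K, hK, h⟩ := bl_pointwise q hq (ε ^ (q / s)) (by positivity)
  have key : ∀ c x : ℝ, 0 ≤ c → (c * |x| ^ q) ^ (s / q) = c ^ (s / q) * |x| ^ s := by
    intro c x hc
    rw [Real.mul_rpow hc (by positivity), ← Real.rpow_mul (abs_nonneg _)]
    congr 2; field_simp
  refine ⟨K ^ (s / q), by positivity, fun a b => ?_⟩
  rcases h a b with h | h
  · have := Real.rpow_le_rpow (abs_nonneg _) h (by positivity : 0 ≤ s / q)
    rw [key _ _ (by positivity), ← Real.rpow_mul hε.le,
      show q / s * (s / q) = 1 by field_simp, Real.rpow_one] at this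
    have : 0 ≤ K ^ (s / q) * |b| ^ s := by positivity
    linarith
  · have := Real.rpow_le_rpow (abs_nonneg _) h (by positivity : 0 ≤ s / q)
    rw [key _ _ hK] at this
    have : 0 ≤ ε * |a| ^ s := by positivity
    linarith

lemma bl_sub_pow (s : ℝ) (hs : 0 < s) (a b : ℝ) :
    |a - b| ^ s ≤ 2 ^ s * (|a| ^ s + |b| ^ s) := by
  have h1 := abs_sub a b
  have ha : 0 ≤ |a| ^ s := by positivity
  have hb : 0 ≤ |b| ^ s := by positivity
  rcases le_total |a| |b| with h | h
  · calc _ ≤ (2 * |b|) ^ s := Real.rpow_le_rpow (abs_nonneg _) (by linarith) hs.le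
      _ = 2 ^ s * |b| ^ s := Real.mul_rpow (by norm_num) (abs_nonneg _)
      _ ≤ _ := by gcongr; linarith
  · calc _ ≤ (2 * |a|) ^ s := Real.rpow_le_rpow (abs_nonneg _) (by linarith) hs.le
      _ = 2 ^ s * |a| ^ s := Real.mul_rpow (by norm_num) (abs_nonneg _)
      _ ≤ _ := by gcongr; linarith

/-- Local Brezis–Lieb lemma, second identity (Lemma 3.3 of the paper). -/
theorem local_brezis_lieb_second
    (N : ℕ) (hN : 1 ≤ N) (s q : ℝ) (hs : 1 < s) (hq1 : 1 ≤ q) (hqs : q ≤ s)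
    (w : ℕ → EuclideanSpace ℝ (Fin N) → ℝ) (wlim : EuclideanSpace ℝ (Fin N) → ℝ)
    (hmeas : ∀ n, Measurable (w n)) (hwmeas : Measurable wlim)
    (hbound : ∃ C : ℝ, ∀ n,
      ∫⁻ x, ENNReal.ofReal (|w n x| ^ s) ∂volume ≤ ENNReal.ofReal C)
    (hae : ∀ᵐ x ∂(volume : Measure (EuclideanSpace ℝ (Fin N))),
      Tendsto (fun n => w n x) atTop (𝓝 (wlim x))) :
    Tendsto (fun n =>
        ∫⁻ x, ENNReal.ofReal
          ((|(|w n x| ^ (q - 1) * w n x - |w n x - wlim x| ^ (q - 1) * (w n x - wlim x)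
              - |wlim x| ^ (q - 1) * wlim x)|) ^ (s / q)) ∂volume)
      atTop (𝓝 0) := by
  obtain ⟨C, hC⟩ := hbound
  have hq0 : 0 < q := by linarith
  have hs0 : 0 < s := by linarith
  have hmm : Measurable (fun a : ℝ => |a| ^ (q - 1) * a) := (bl_phi_cont q hq1).measurable
  have hms : Measurable (fun a : ℝ => ENNReal.ofReal (|a| ^ s)) :=
    ((continuous_abs.rpow_const fun x => Or.inr hs0.le).measurable).ennreal_ofReal
  -- Fatou
  have hlim : ∫⁻ x, ENNReal.ofReal (|wlim x| ^ s) ∂volume ≤ ENNReal.ofReal C := by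
    calc ∫⁻ x, ENNReal.ofReal (|wlim x| ^ s) ∂volume
        = ∫⁻ x, liminf (fun n => ENNReal.ofReal (|w n x| ^ s)) atTop ∂volume := by
          refine lintegral_congr_ae ?_
          filter_upwards [hae] with x hx
          exact ((ENNReal.tendsto_ofReal (hx.abs.rpow_const (Or.inr hs0.le))).liminf_eq).symm
      _ ≤ liminf (fun n => ∫⁻ x, ENNReal.ofReal (|w n x| ^ s) ∂volume) atTop :=
          lintegral_liminf_le fun n => hms.comp (hmeas n)
      _ ≤ liminf (fun _ : ℕ => ENNReal.ofReal C) atTop :=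
          liminf_le_liminf (Eventually.of_forall hC)
      _ = _ := liminf_const _
  have hv : ∀ n, ∫⁻ x, ENNReal.ofReal (|w n x - wlim x| ^ s) ∂volume
      ≤ ENNReal.ofReal (2 ^ s) * (ENNReal.ofReal C + ENNReal.ofReal C) := by
    intro n
    calc ∫⁻ x, ENNReal.ofReal (|w n x - wlim x| ^ s) ∂volume
        ≤ ∫⁻ x, ENNReal.ofReal (2 ^ s) *
            (ENNReal.ofReal (|w n x| ^ s) + ENNReal.ofReal (|wlim x| ^ s)) ∂volume := by
          refine lintegral_mono fun x => ?_
          rw [← ENNReal.ofReal_add (by positivity) (by positivity),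
            ← ENNReal.ofReal_mul (by positivity)]
          exact ENNReal.ofReal_le_ofReal (bl_sub_pow s hs0 _ _)
      _ = ENNReal.ofReal (2 ^ s) * (∫⁻ x, ENNReal.ofReal (|w n x| ^ s) ∂volume
            + ∫⁻ x, ENNReal.ofReal (|wlim x| ^ s) ∂volume) := by
          rw [lintegral_const_mul' _ _ ENNReal.ofReal_ne_top]
          congr 1
          exact lintegral_add_left (hms.comp (hmeas n)) _
      _ ≤ _ := by gcongr; exact hC n
  set F : ℕ → EuclideanSpace ℝ (Fin N) → ENNReal := fun n x => ENNReal.ofReal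
          ((|(|w n x| ^ (q - 1) * w n x - |w n x - wlim x| ^ (q - 1) * (w n x - wlim x)
              - |wlim x| ^ (q - 1) * wlim x)|) ^ (s / q)) with hF
  change Tendsto (fun n => ∫⁻ x, F n x ∂volume) atTop (𝓝 0)
  have hFm : ∀ n, Measurable (F n) := by
    intro n
    have h1 := hmm.comp (hmeas n)
    have h2 := hmm.comp ((hmeas n).sub hwmeas)
    have h3 := hmm.comp hwmeas
    have hc : Measurable (fun a : ℝ => |a| ^ (s / q)) :=
      (continuous_abs.rpow_const fun x => Or.inr (by positivity)).measurable
    exact (hc.comp ((h1.sub h2).sub h3)).ennreal_ofReal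
  have hF0 : ∀ᵐ x ∂(volume : Measure (EuclideanSpace ℝ (Fin N))),
      Tendsto (fun n => F n x) atTop (𝓝 0) := by
    filter_upwards [hae] with x hx
    have hc := bl_phi_cont q hq1
    have h1 := (hc.tendsto (wlim x)).comp hx
    have h2 := (hc.tendsto (wlim x - wlim x)).comp (hx.sub_const (wlim x))
    have h3 := (h1.sub h2).sub_const (|wlim x| ^ (q - 1) * wlim x)
    have h4 := ENNReal.tendsto_ofReal
      (h3.abs.rpow_const (p := s / q) (Or.inr (by positivity)))
    simpa [Real.zero_rpow (by positivity : s / q ≠ 0)] using h4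
  set M := ENNReal.ofReal (2 ^ s) * (ENNReal.ofReal C + ENNReal.ofReal C) with hM
  have hMtop : M ≠ ⊤ := by
    rw [hM]
    exact ENNReal.mul_ne_top ENNReal.ofReal_ne_top
      (ENNReal.add_ne_top.2 ⟨ENNReal.ofReal_ne_top, ENNReal.ofReal_ne_top⟩)
  have hls : ∀ ε : ℝ, 0 < ε →
      limsup (fun n => ∫⁻ x, F n x ∂volume) atTop ≤ ENNReal.ofReal ε * M := by
    intro ε hε
    obtain ⟨K, hK, hp⟩ := bl_pointwise_pow s q hq1 hqs ε hε
    set V : ℕ → EuclideanSpace ℝ (Fin N) → ENNReal := fun n x =>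
      ENNReal.ofReal ε * ENNReal.ofReal (|w n x - wlim x| ^ s) with hV
    have hVm : ∀ n, Measurable (V n) := fun n =>
      (hms.comp ((hmeas n).sub hwmeas)).const_mul _
    have hG : Tendsto (fun n => ∫⁻ x, (F n x - V n x) ∂volume) atTop
        (𝓝 (∫⁻ x, (0 : ENNReal) ∂(volume : Measure (EuclideanSpace ℝ (Fin N))))) := by
      refine tendsto_lintegral_of_dominated_convergence
        (fun x => ENNReal.ofReal K * ENNReal.ofReal (|wlim x| ^ s))
        (fun n => (hFm n).sub (hVm n)) ?_ ?_ ?_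
      · intro n
        refine Eventually.of_forall fun x => ?_
        refine tsub_le_iff_left.2 ?_
        simp only [hF, hV]
        rw [← ENNReal.ofReal_mul hε.le, ← ENNReal.ofReal_mul hK,
          ← ENNReal.ofReal_add (by positivity) (by positivity)]
        refine ENNReal.ofReal_le_ofReal ?_
        have := hp (w n x - wlim x) (wlim x)
        rwa [sub_add_cancel] at this
      · rw [lintegral_const_mul' _ _ ENNReal.ofReal_ne_top]
        exact ENNReal.mul_ne_top ENNReal.ofReal_ne_top
          (ne_top_of_le_ne_top ENNReal.ofReal_ne_top hlim)
      · filter_upwards [hF0] with x hx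
        exact tendsto_of_tendsto_of_tendsto_of_le_of_le tendsto_const_nhds hx
          (fun _ => zero_le) (fun _ => tsub_le_self)
    rw [lintegral_zero] at hG
    have hle : ∀ n, ∫⁻ x, F n x ∂volume
        ≤ ∫⁻ x, (F n x - V n x) ∂volume + ENNReal.ofReal ε * M := by
      intro n
      calc ∫⁻ x, F n x ∂volume ≤ ∫⁻ x, ((F n x - V n x) + V n x) ∂volume :=
            lintegral_mono fun x => le_tsub_add
        _ = ∫⁻ x, (F n x - V n x) ∂volume + ∫⁻ x, V n x ∂volume :=
            lintegral_add_right _ (hVm n)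
        _ ≤ _ := by
            simp only [hV]
            rw [lintegral_const_mul' _ _ ENNReal.ofReal_ne_top]
            gcongr
            exact hv n
    have hG2 := hG.add_const (ENNReal.ofReal ε * M)
    rw [zero_add] at hG2
    calc _ ≤ limsup (fun n => ∫⁻ x, (F n x - V n x) ∂volume + ENNReal.ofReal ε * M) atTop :=
          limsup_le_limsup (Eventually.of_forall hle)
      _ = _ := hG2.limsup_eq
  have hlim0 : Tendsto (fun ε : ℝ => ENNReal.ofReal ε * M) (𝓝[>] 0) (𝓝 0) := by
    have h1 : Tendsto (fun ε : ℝ => ENNReal.ofReal ε) (𝓝[>] 0) (𝓝 (ENNReal.ofReal 0)) :=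
      (ENNReal.tendsto_ofReal tendsto_id).mono_left nhdsWithin_le_nhds
    have h2 := ENNReal.Tendsto.mul_const h1 (Or.inr hMtop)
    simpa using h2
  have hfin : limsup (fun n => ∫⁻ x, F n x ∂volume) atTop ≤ 0 :=
    ge_of_tendsto hlim0 (by filter_upwards [self_mem_nhdsWithin] with ε hε using hls ε hε)
  exact tendsto_of_le_liminf_of_limsup_le zero_le hfin
end

section
/- Let N ≥ 3 be an integer, α ∈ (0,N) and p ∈ [1, 2N/(N+α)) be real numbers. Let (u_n) be a sequence of measurable functions from ℝ^N to ℝ with sup_n ∫_{ℝ^N} |u_n|^{2Np/(N+α)} dx < ∞, converging almost everywhere on ℝ^N to a measurable function u. Then lim_{n→∞} ∫_{ℝ^N} | ∫_{ℝ^N} ( |u_n(y)|^p |u_n(x)|^p − |u_n(y) − u(y)|^p |u_n(x) − u(x)|^p − |u(y)|^p |u(x)|^p ) · |x − y|^{α−N} dy | dx = 0. -/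
open MeasureTheory Filter Topology
open scoped ENNReal

lemma radial_lint (N : ℕ) (hN : 3 ≤ N) (f : ℝ → ℝ) (hf0 : ∀ t, 0 < t → 0 ≤ f t) (hf0' : 0 ≤ f 0)
    (hint : IntegrableOn (fun y : ℝ => y ^ (N - 1) * f y) (Set.Ioi 0)) :
    ∫⁻ z : EuclideanSpace ℝ (Fin N), ENNReal.ofReal (f ‖z‖) =
      ENNReal.ofReal (N * (volume.real (Metric.ball (0 : EuclideanSpace ℝ (Fin N)) 1)) *
        ∫ y in Set.Ioi (0:ℝ), y ^ (N - 1) * f y) := by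
  have : Nonempty (Fin N) := ⟨⟨0, by omega⟩⟩
  have hI : Integrable (fun z : EuclideanSpace ℝ (Fin N) => f ‖z‖) := by
    rw [integrable_fun_norm_addHaar]
    simpa using hint
  rw [← ofReal_integral_eq_lintegral_ofReal hI, integral_fun_norm_addHaar]
  · simp [mul_assoc]
  · filter_upwards with z
    rcases (norm_nonneg z).eq_or_lt with h | h
    · simpa [← h] using hf0'
    · exact hf0 _ h

lemma near_lint (N : ℕ) (hN : 3 ≤ N) (α : ℝ) (hα0 : 0 < α) :
    ∃ c : ℝ, 0 ≤ c ∧ ∀ R : ℝ, 0 < R →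
    ∫⁻ z : EuclideanSpace ℝ (Fin N),
      ENNReal.ofReal ((Set.Iio R).indicator (fun t => t ^ (α - N)) ‖z‖) = 
      ENNReal.ofReal (c * R ^ α) := by
  refine ⟨N * (volume.real (Metric.ball (0 : EuclideanSpace ℝ (Fin N)) 1)) / α, by positivity, ?_⟩
  intro R hR
  have key : Set.EqOn (fun y : ℝ => y ^ (N - 1) * (Set.Iio R).indicator (fun t => t ^ (α - N)) y)
      ((Set.Iio R).indicator (fun y : ℝ => y ^ (α - 1))) (Set.Ioi 0) := by
    intro y hy
    by_cases h : y < R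
    · simp only [Set.indicator, Set.mem_Iio, h, if_true]
      rw [← Real.rpow_natCast, ← Real.rpow_add hy]
      congr 1
      rw [Nat.cast_sub (by omega)]; push_cast; ring
    · simp [Set.indicator, h]
  have hI : IntegrableOn (fun y : ℝ => y ^ (α - 1)) (Set.Ioc 0 R) := 
    (intervalIntegrable_iff_integrableOn_Ioc_of_le hR.le).1
      (intervalIntegral.intervalIntegrable_rpow' (by linarith))
  have hI' : IntegrableOn (fun y : ℝ => y ^ (α - 1)) (Set.Ioo 0 R) := 
    hI.mono_set Set.Ioo_subset_Ioc_self
  rw [radial_lint N hN]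
  · rw [setIntegral_congr_fun measurableSet_Ioi key, setIntegral_indicator measurableSet_Iio,
      Set.Ioi_inter_Iio, ← integral_Ioc_eq_integral_Ioo, ← intervalIntegral.integral_of_le hR.le,
      integral_rpow (by left; linarith)]
    congr 1
    simp [Real.zero_rpow hα0.ne']
    ring
  · intro t ht
    simp only [Set.indicator]
    split_ifs <;> positivity
  · simp only [Set.indicator]
    split_ifs <;> positivity
  · rw [integrableOn_congr_fun key measurableSet_Ioi, IntegrableOn, 
      integrable_indicator_iff measurableSet_Iio, IntegrableOn, Measure.restrict_restrict measurableSet_Iio,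
      Set.Iio_inter_Ioi]
    exact hI'

lemma far_lint (N : ℕ) (hN : 3 ≤ N) :
    ∃ c : ℝ, 0 ≤ c ∧ ∀ R : ℝ, 0 < R →
    ∫⁻ z : EuclideanSpace ℝ (Fin N),
      ENNReal.ofReal ((Set.Ioi R).indicator (fun t => t ^ (-(2:ℝ) * N)) ‖z‖) = 
      ENNReal.ofReal (c * R ^ (-(N:ℝ))) := by
  refine ⟨(volume.real (Metric.ball (0 : EuclideanSpace ℝ (Fin N)) 1)), by positivity, ?_⟩
  intro R hR
  have hN0 : (0:ℝ) < N := by exact_mod_cast (by omega : 0 < N)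
  have key : Set.EqOn (fun y : ℝ => y ^ (N - 1) * (Set.Ioi R).indicator (fun t => t ^ (-(2:ℝ) * N)) y)
      ((Set.Ioi R).indicator (fun y : ℝ => y ^ (-(N:ℝ) - 1))) (Set.Ioi 0) := by
    intro y hy
    by_cases h : R < y
    · simp only [Set.indicator, Set.mem_Ioi, h, if_true]
      rw [← Real.rpow_natCast, ← Real.rpow_add hy]
      congr 1
      rw [Nat.cast_sub (by omega)]; push_cast; ring
    · simp [Set.indicator, h]
  have hI : IntegrableOn (fun y : ℝ => y ^ (-(N:ℝ) - 1)) (Set.Ioi R) := 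
    integrableOn_Ioi_rpow_of_lt (by linarith) hR
  have hs : Set.Ioi R ∩ Set.Ioi 0 = Set.Ioi R := by
    rw [Set.Ioi_inter_Ioi, max_eq_left hR.le]
  rw [radial_lint N hN]
  · rw [setIntegral_congr_fun measurableSet_Ioi key, setIntegral_indicator measurableSet_Ioi,
      Set.inter_comm, hs, integral_Ioi_rpow_of_lt (by linarith) hR]
    congr 1
    simp
    field_simp
  · intro t ht
    simp only [Set.indicator]
    split_ifs <;> positivity
  · simp only [Set.indicator]
    split_ifs <;> positivity
  · rw [integrableOn_congr_fun key measurableSet_Ioi, IntegrableOn, 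
      integrable_indicator_iff measurableSet_Ioi, IntegrableOn, Measure.restrict_restrict measurableSet_Ioi, hs]
    exact hI

lemma bl_pointwise_s2 (p : ℝ) (hp : 1 ≤ p) (ε : ℝ) (hε : 0 < ε) :
    ∃ C : ℝ, 0 ≤ C ∧ ∀ a b : ℝ, |(|a| ^ p - |a - b| ^ p - |b| ^ p)| ≤ ε * |a - b| ^ p + C * |b| ^ p := by
  have hc : ContinuousAt (fun t : ℝ => |1 + t| ^ p) 0 := by
    apply Continuous.continuousAt
    exact (by fun_prop : Continuous fun t : ℝ => |1 + t|).rpow_const (fun _ => Or.inr (by linarith))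
  rw [Metric.continuousAt_iff] at hc
  obtain ⟨δ, hδ, h⟩ := hc ε hε
  refine ⟨(1 + 1 / δ) ^ p + (1 / δ) ^ p + 1, by positivity, ?_⟩
  intro a b
  obtain ⟨s, rfl⟩ : ∃ s, a = s + b := ⟨a - b, by ring⟩
  rw [add_sub_cancel_right]
  have hb0 : 0 ≤ |b| ^ p := by positivity
  by_cases hb : |b| < δ * |s|
  · have hs : s ≠ 0 := by
      rintro rfl
      simp at hb
      linarith [abs_nonneg b]
    have hs' : 0 < |s| := abs_pos.2 hs
    have h1 : dist (b / s) 0 < δ := by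
      rw [dist_zero_right, Real.norm_eq_abs, abs_div, div_lt_iff₀ hs']; exact hb
    have h2 := h h1
    simp only [add_zero, abs_one, Real.one_rpow, Real.dist_eq] at h2
    have h3 : |s + b| ^ p = |s| ^ p * |1 + b / s| ^ p := by
      rw [← Real.mul_rpow (by positivity) (by positivity), ← abs_mul]
      congr 2; field_simp
    have h4 : |(|s + b| ^ p - |s| ^ p)| ≤ ε * |s| ^ p := by
      rw [h3, show |s| ^ p * |1 + b / s| ^ p - |s| ^ p = |s| ^ p * (|1 + b / s| ^ p - 1) by ring,
        abs_mul, abs_of_nonneg (by positivity : 0 ≤ |s| ^ p), mul_comm]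
      gcongr
    have h5 : |(|s + b| ^ p - |s| ^ p - |b| ^ p)| ≤ |(|s + b| ^ p - |s| ^ p)| + |b| ^ p := by
      refine (abs_sub _ _).trans ?_
      rw [abs_of_nonneg hb0]
    have h6 : 0 ≤ ((1 + 1 / δ) ^ p + (1 / δ) ^ p) * |b| ^ p := by positivity
    linarith
  · push Not at hb
    have hs : |s| ≤ 1 / δ * |b| := by
      rw [div_mul_eq_mul_div, le_div_iff₀ hδ]; linarith
    have h1 : |s| ^ p ≤ (1 / δ) ^ p * |b| ^ p := by
      rw [← Real.mul_rpow (by positivity) (by positivity)]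
      gcongr
    have h2 : |s + b| ^ p ≤ (1 + 1 / δ) ^ p * |b| ^ p := by
      rw [← Real.mul_rpow (by positivity) (by positivity)]
      gcongr
      linarith [abs_add_le s b]
    have h3 : 0 ≤ |s + b| ^ p := by positivity
    have h4 : 0 ≤ |s| ^ p := by positivity
    have h5 : 0 ≤ ε * |s| ^ p := by positivity
    rw [abs_le]
    constructor <;> linarith

noncomputable def rK (N : ℕ) (α : ℝ) (z : EuclideanSpace ℝ (Fin N)) : ℝ≥0∞ :=
  ENNReal.ofReal (‖z‖ ^ (α - N))

lemma rK_meas (N : ℕ) (α : ℝ) : Measurable (rK N α) := by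
  unfold rK
  fun_prop

lemma rK_symm (N : ℕ) (α : ℝ) (x y : EuclideanSpace ℝ (Fin N)) : rK N α (x - y) = rK N α (y - x) := by
  unfold rK
  rw [norm_sub_rev]

lemma conj_exp (N : ℕ) (hN : 3 ≤ N) (α : ℝ) (hα0 : 0 < α) (hαN : α < N) :
    (2 * N / (N + α)).HolderConjugate (2 * N / (N - α)) := by
  have hN0 : (0:ℝ) < N := by linarith
  have h1 : (0:ℝ) < N + α := by linarith
  have h2 : (0:ℝ) < N - α := by linarith
  rw [Real.holderConjugate_iff]
  constructor
  · rw [lt_div_iff₀ h1]; linarith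
  · field_simp; ring

lemma trunc_bound (N : ℕ) (hN : 3 ≤ N) (α : ℝ) (hα0 : 0 < α) (hαN : α < N) :
    ∃ C : ℝ≥0∞, C ≠ 0 ∧ C ≠ ∞ ∧ ∀ g : EuclideanSpace ℝ (Fin N) → ℝ≥0∞, Measurable g →
      ∫⁻ x, g x ^ (2 * N / (N + α)) ≤ 1 → ∀ (x : EuclideanSpace ℝ (Fin N)) (a : ℝ≥0∞),
      ∫⁻ y, (if g y ≤ a then g y else 0) * rK N α (x - y) ≤ C * a ^ (2 * N / (N + α) - 1) := by
  obtain ⟨c1, hc1, h1⟩ := near_lint N hN α hα0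
  obtain ⟨c2, hc2, h2⟩ := far_lint N hN
  have hconj := conj_exp N hN α hα0 hαN
  set r := 2 * N / (N + α) with hr
  set r' := 2 * N / (N - α) with hr'
  have hN0 : (0:ℝ) < N := by linarith
  have hp1 : (0:ℝ) < N + α := by linarith
  have hp2 : (0:ℝ) < N - α := by linarith
  have hr1 : 1 < r := hconj.lt
  have hr'0 : 0 < r' := by positivity
  refine ⟨ENNReal.ofReal (c1 * 2 ^ α + c2 ^ (1 / r') + 1), ?_, ENNReal.ofReal_ne_top, ?_⟩
  · simp only [ne_eq, ENNReal.ofReal_eq_zero, not_le]; positivity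
  intro g hg hgi x a
  rcases eq_or_ne a 0 with rfl | ha0
  · have : ∀ y, (if g y ≤ 0 then g y else 0) * rK N α (x - y) = 0 := by
      intro y
      split_ifs with h
      · rw [le_antisymm h bot_le]; simp
      · simp
    rw [lintegral_congr this, lintegral_zero]
    exact bot_le
  rcases eq_or_ne a ∞ with rfl | hat
  · rw [ENNReal.top_rpow_of_pos (by linarith), ENNReal.mul_top]
    · exact le_top
    · simp only [ne_eq, ENNReal.ofReal_eq_zero, not_le]; positivity
  obtain ⟨t, ht, rfl⟩ : ∃ t : ℝ, 0 < t ∧ a = ENNReal.ofReal t :=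
    ⟨a.toReal, ENNReal.toReal_pos ha0 hat, (ENNReal.ofReal_toReal hat).symm⟩
  set R : ℝ := t ^ (-2 / (N + α)) with hR
  have hR0 : 0 < R := by positivity
  set nr : EuclideanSpace ℝ (Fin N) → ℝ≥0∞ := fun z =>
    ENNReal.ofReal ((Set.Iio (2 * R)).indicator (fun t => t ^ (α - N)) ‖z‖) with hnr
  set fr : EuclideanSpace ℝ (Fin N) → ℝ≥0∞ := fun z =>
    ENNReal.ofReal ((Set.Ioi R).indicator (fun t => t ^ (α - N)) ‖z‖) with hfr
  have hnm : Measurable nr := by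
    refine ENNReal.measurable_ofReal.comp ?_
    exact (Measurable.indicator (by fun_prop) measurableSet_Iio).comp measurable_norm
  have hfm : Measurable fr := by
    refine ENNReal.measurable_ofReal.comp ?_
    exact (Measurable.indicator (by fun_prop) measurableSet_Ioi).comp measurable_norm
  have hpt : ∀ y, (if g y ≤ ENNReal.ofReal t then g y else 0) * rK N α (x - y) ≤
      ENNReal.ofReal t * nr (x - y) + g y * fr (x - y) := by
    intro y
    by_cases hy : ‖x - y‖ < 2 * R
    · refine le_trans ?_ le_self_add
      have : rK N α (x - y) = nr (x - y) := by simp [rK, hnr, Set.indicator, hy]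
      rw [this]
      gcongr
      split_ifs with h
      · exact h
      · exact bot_le
    · refine le_trans ?_ le_add_self
      have : rK N α (x - y) = fr (x - y) := by
        have : R < ‖x - y‖ := by linarith
        simp [rK, hfr, Set.indicator, this]
      rw [this]
      gcongr
      split_ifs with h
      · exact le_rfl
      · exact bot_le
  have hfar : ∫⁻ y, g y * fr (x - y) ≤ ENNReal.ofReal (c2 ^ (1 / r') * R ^ (-(N - α) / 2)) := by
    have hold := ENNReal.lintegral_mul_le_Lp_mul_Lq (volume : Measure (EuclideanSpace ℝ (Fin N)))
      hconj (f := g) (g := fun y => fr (x - y)) hg.aemeasurable (by fun_prop)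
    refine hold.trans ?_
    have e1 : (∫⁻ a, g a ^ r) ^ (1 / r) ≤ 1 := ENNReal.rpow_le_one hgi (by positivity)
    have e2 : ∀ z, fr z ^ r' =
        ENNReal.ofReal ((Set.Ioi R).indicator (fun t => t ^ (-(2:ℝ) * N)) ‖z‖) := by
      intro z
      simp only [hfr, Set.indicator]
      split_ifs with h
      · rw [ENNReal.ofReal_rpow_of_nonneg (by positivity) hr'0.le, ← Real.rpow_mul (norm_nonneg _)]
        congr 2
        rw [hr']; field_simp; ring
      · simp [hr'0]
    have e3 : ∫⁻ a, fr (x - a) ^ r' = ENNReal.ofReal (c2 * R ^ (-(N:ℝ))) := by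
      rw [lintegral_sub_left_eq_self (fun z => fr z ^ r') x, ← h2 R hR0]
      exact lintegral_congr e2
    rw [e3, ENNReal.ofReal_rpow_of_nonneg (by positivity) (by positivity),
      Real.mul_rpow hc2 (by positivity), ← Real.rpow_mul hR0.le,
      show -(N:ℝ) * (1 / r') = -(N - α) / 2 by rw [hr']; field_simp]
    exact mul_le_of_le_one_left' e1
  have hnear : ∫⁻ y, ENNReal.ofReal t * nr (x - y) = ENNReal.ofReal (t * (c1 * (2 * R) ^ α)) := by
    rw [lintegral_const_mul _ (by fun_prop), lintegral_sub_left_eq_self nr x, h1 (2 * R) (by positivity),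
      ENNReal.ofReal_mul ht.le]
  calc _ ≤ ∫⁻ y, (ENNReal.ofReal t * nr (x - y) + g y * fr (x - y)) := lintegral_mono hpt
    _ = (∫⁻ y, ENNReal.ofReal t * nr (x - y)) + ∫⁻ y, g y * fr (x - y) :=
        lintegral_add_left (by fun_prop) _
    _ ≤ ENNReal.ofReal (t * (c1 * (2 * R) ^ α)) + ENNReal.ofReal (c2 ^ (1 / r') * R ^ (-(N - α) / 2)) := by
        rw [hnear]; gcongr
    _ = ENNReal.ofReal ((c1 * 2 ^ α + c2 ^ (1 / r')) * t ^ (r - 1)) := by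
        rw [← ENNReal.ofReal_add (by positivity) (by positivity)]
        congr 1
        have q1 : R ^ (-(N - α) / 2) = t ^ (r - 1) := by
          rw [hR, ← Real.rpow_mul ht.le]; congr 1; rw [hr]; field_simp; ring
        have q2 : t * R ^ α = t ^ (r - 1) := by
          rw [hR, ← Real.rpow_mul ht.le]
          nth_rw 1 [← Real.rpow_one t]
          rw [← Real.rpow_add ht]
          congr 1; rw [hr]; field_simp; ring
        rw [Real.mul_rpow (by norm_num) hR0.le, q1, add_mul, ← q2]
        ring
    _ ≤ _ := by
        rw [ENNReal.ofReal_rpow_of_pos ht, ← ENNReal.ofReal_mul (by positivity)]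
        apply ENNReal.ofReal_le_ofReal
        exact mul_le_mul_of_nonneg_right (by linarith) (by positivity)

lemma hls_one (N : ℕ) (hN : 3 ≤ N) (α : ℝ) (hα0 : 0 < α) (hαN : α < N) :
    ∃ C : ℝ≥0∞, C ≠ ∞ ∧ ∀ f g : EuclideanSpace ℝ (Fin N) → ℝ≥0∞, Measurable f → Measurable g →
      ∫⁻ x, f x ^ (2 * N / (N + α)) ≤ 1 → ∫⁻ x, g x ^ (2 * N / (N + α)) ≤ 1 →
      ∫⁻ x, ∫⁻ y, f x * (g y * rK N α (x - y)) ≤ C := by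
  obtain ⟨C, hC0, hC, h⟩ := trunc_bound N hN α hα0 hαN
  refine ⟨C + C, by simp [hC], ?_⟩
  intro f g hf hg hfi hgi
  have hr1 := (conj_exp N hN α hα0 hαN).lt
  set r := 2 * N / (N + α) with hr
  have hK := rK_meas N α
  have half : ∀ f g : EuclideanSpace ℝ (Fin N) → ℝ≥0∞, Measurable f → Measurable g →
      ∫⁻ x, f x ^ r ≤ 1 → ∫⁻ x, g x ^ r ≤ 1 →
      ∫⁻ x, ∫⁻ y, f x * ((if g y ≤ f x then g y else 0) * rK N α (x - y)) ≤ C := by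
    intro f g hf hg hfi hgi
    calc _ ≤ ∫⁻ x, C * f x ^ r := by
          apply lintegral_mono
          intro x
          dsimp only
          rw [lintegral_const_mul]
          · calc _ ≤ f x * (C * f x ^ (r - 1)) := by gcongr; exact h g hg hgi x (f x)
              _ = C * (f x ^ (1:ℝ) * f x ^ (r - 1)) := by rw [ENNReal.rpow_one]; ring
              _ = C * f x ^ r := by
                rw [← ENNReal.rpow_add_of_nonneg _ _ (by norm_num) (by linarith)]
                congr 2; ring
          · refine Measurable.mul ?_ (by fun_prop)
            exact Measurable.ite (measurableSet_le hg measurable_const) hg measurable_const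
      _ = C * ∫⁻ x, f x ^ r := lintegral_const_mul _ (by fun_prop)
      _ ≤ C * 1 := by gcongr
      _ = C := mul_one _
  have m2 : ∀ f g : EuclideanSpace ℝ (Fin N) → ℝ≥0∞, Measurable f → Measurable g →
      Measurable (fun q : EuclideanSpace ℝ (Fin N) × EuclideanSpace ℝ (Fin N) =>
        f q.1 * ((if g q.2 ≤ f q.1 then g q.2 else 0) * rK N α (q.1 - q.2))) := by
    intro f g hf hg
    refine Measurable.mul (by fun_prop) (Measurable.mul ?_ (by fun_prop))
    exact Measurable.ite (measurableSet_le (by fun_prop) (by fun_prop)) (by fun_prop) measurable_const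
  calc _ ≤ ∫⁻ x, ((∫⁻ y, f x * ((if g y ≤ f x then g y else 0) * rK N α (x - y))) +
          ∫⁻ y, g y * ((if f x ≤ g y then f x else 0) * rK N α (y - x))) := by
        apply lintegral_mono
        intro x
        dsimp only
        rw [← lintegral_add_left]
        · apply lintegral_mono
          intro y
          dsimp only
          rw [rK_symm N α y x]
          rcases le_total (g y) (f x) with h | h
          · simp only [h, if_true]; exact le_self_add
          · simp only [h, if_true]
            refine le_trans (le_of_eq ?_) le_add_self
            ring
        · exact (m2 f g hf hg).comp (by fun_prop : Measurable fun y => (x, y))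
    _ = (∫⁻ x, ∫⁻ y, f x * ((if g y ≤ f x then g y else 0) * rK N α (x - y))) +
          ∫⁻ x, ∫⁻ y, g y * ((if f x ≤ g y then f x else 0) * rK N α (y - x)) := by
        rw [lintegral_add_left]
        exact (m2 f g hf hg).lintegral_prod_right'
    _ ≤ C + C := by
        gcongr
        · exact half f g hf hg hfi hgi
        · rw [lintegral_lintegral_swap]
          · exact half g f hg hf hgi hfi
          · exact ((m2 g f hg hf).comp measurable_swap).aemeasurable

lemma hls (N : ℕ) (hN : 3 ≤ N) (α : ℝ) (hα0 : 0 < α) (hαN : α < N) :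
    ∃ C : ℝ≥0∞, C ≠ ∞ ∧ ∀ f g : EuclideanSpace ℝ (Fin N) → ℝ≥0∞, Measurable f → Measurable g →
      ∀ s t : ℝ≥0∞, s ≠ 0 → s ≠ ∞ → t ≠ 0 → t ≠ ∞ →
      ∫⁻ x, f x ^ (2 * N / (N + α)) ≤ s ^ (2 * N / (N + α)) →
      ∫⁻ x, g x ^ (2 * N / (N + α)) ≤ t ^ (2 * N / (N + α)) →
      ∫⁻ x, ∫⁻ y, f x * (g y * rK N α (x - y)) ≤ C * s * t := by
  obtain ⟨C, hC, h⟩ := hls_one N hN α hα0 hαN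
  refine ⟨C, hC, ?_⟩
  intro f g hf hg s t hs hs' ht ht' hfi hgi
  have hr1 := (conj_exp N hN α hα0 hαN).lt
  set r := 2 * N / (N + α) with hr
  have hK := rK_meas N α
  have sc : ∀ f : EuclideanSpace ℝ (Fin N) → ℝ≥0∞, Measurable f → ∀ s : ℝ≥0∞, s ≠ 0 → s ≠ ∞ →
      ∫⁻ x, f x ^ r ≤ s ^ r → ∫⁻ x, (s⁻¹ * f x) ^ r ≤ 1 := by
    intro f hf s hs hs' hfi
    simp_rw [ENNReal.mul_rpow_of_nonneg _ _ (by linarith : 0 ≤ r)]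
    rw [lintegral_const_mul _ (by fun_prop)]
    calc _ ≤ s⁻¹ ^ r * s ^ r := by gcongr
      _ = 1 := by
        rw [← ENNReal.mul_rpow_of_nonneg _ _ (by linarith : 0 ≤ r), ENNReal.inv_mul_cancel hs hs']
        simp
  have := h (fun x => s⁻¹ * f x) (fun x => t⁻¹ * g x) (by fun_prop) (by fun_prop)
    (sc f hf s hs hs' hfi) (sc g hg t ht ht' hgi)
  have e : ∀ x y, f x * (g y * rK N α (x - y)) =
      (s * t) * (s⁻¹ * f x * (t⁻¹ * g y * rK N α (x - y))) := by
    intro x y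
    calc _ = 1 * 1 * (f x * (g y * rK N α (x - y))) := by ring
      _ = (s * s⁻¹) * (t * t⁻¹) * (f x * (g y * rK N α (x - y))) := by
        rw [ENNReal.mul_inv_cancel hs hs', ENNReal.mul_inv_cancel ht ht']
      _ = _ := by ring
  simp_rw [e]
  have m : Measurable (fun q : EuclideanSpace ℝ (Fin N) × EuclideanSpace ℝ (Fin N) =>
      s⁻¹ * f q.1 * (t⁻¹ * g q.2 * rK N α (q.1 - q.2))) := by fun_prop
  have e2 : ∀ x, ∫⁻ y, (s * t) * (s⁻¹ * f x * (t⁻¹ * g y * rK N α (x - y))) =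
     (s * t) * ∫⁻ y, (s⁻¹ * f x * (t⁻¹ * g y * rK N α (x - y))) := fun x => by
    rw [lintegral_const_mul]
    fun_prop
  simp_rw [e2]
  rw [lintegral_const_mul _ m.lintegral_prod_right']
  calc _ ≤ s * t * C := by gcongr
    _ = _ := by ring

lemma exists_small_mul (M ε : ℝ≥0∞) (hM : M ≠ ∞) (hε : ε ≠ 0) : ∃ η : ℝ≥0∞, η ≠ 0 ∧ η ≠ ∞ ∧ η * M ≤ ε := by
  obtain ⟨n, hn, h⟩ := ENNReal.exists_nnreal_pos_mul_lt hM hε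
  exact ⟨n, by simpa using hn.ne', by simp, h.le⟩

lemma dual_bound (N : ℕ) (hN : 3 ≤ N) (α : ℝ) (hα0 : 0 < α) (hαN : α < N)
    (h : EuclideanSpace ℝ (Fin N) → ℝ≥0∞) (hh : Measurable h)
    (hi : ∫⁻ x, h x ^ (2 * N / (N + α)) ≠ ∞) :
    ∫⁻ x, (∫⁻ y, h y * rK N α (x - y)) ^ (2 * N / (N - α)) ≠ ∞ := by
  obtain ⟨C, hC, hB⟩ := hls N hN α hα0 hαN
  have hconj := conj_exp N hN α hα0 hαN
  have hK := rK_meas N α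
  set r := 2 * N / (N + α) with hr
  set r' := 2 * N / (N - α) with hr'
  have hr1 : 1 < r := hconj.lt
  have hr'1 : 1 < r' := hconj.symm.lt
  set H : EuclideanSpace ℝ (Fin N) → ℝ≥0∞ := fun x => ∫⁻ y, h y * rK N α (x - y) with hH
  have hHm : Measurable H := by
    have : Measurable (fun q : EuclideanSpace ℝ (Fin N) × EuclideanSpace ℝ (Fin N) =>
      h q.2 * rK N α (q.1 - q.2)) := by fun_prop
    exact this.lintegral_prod_right'
  obtain ⟨t, ht0, htt, ht⟩ : ∃ t : ℝ≥0∞, t ≠ 0 ∧ t ≠ ∞ ∧ ∫⁻ x, h x ^ r ≤ t ^ r := by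
    refine ⟨((∫⁻ x, h x ^ r) + 1) ^ (1 / r), ?_, ?_, ?_⟩
    · simp [ENNReal.rpow_eq_zero_iff, hi]
    · exact ENNReal.rpow_ne_top_of_nonneg (by positivity) (by simp [hi])
    · rw [← ENNReal.rpow_mul, one_div, inv_mul_cancel₀ (by linarith), ENNReal.rpow_one]
      exact le_self_add
  set m : ℕ → EuclideanSpace ℝ (Fin N) → ℝ≥0∞ := fun n x => if ‖x‖ < n then min (H x) n else 0 with hm
  have hmm : ∀ n, Measurable (m n) := fun n =>
    Measurable.ite (measurableSet_lt measurable_norm measurable_const) (hHm.min measurable_const)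
      measurable_const
  have hmH : ∀ n x, m n x ≤ H x := by
    intro n x
    simp only [hm]
    split_ifs
    · exact min_le_left _ _
    · exact bot_le
  have hJ : ∀ n, ∫⁻ x, m n x ^ r' ≤ (C * t) ^ r' := by
    intro n
    set J := ∫⁻ x, m n x ^ r' with hJdef
    have hJt : J ≠ ∞ := by
      have : J ≤ ∫⁻ x, (Metric.ball (0 : EuclideanSpace ℝ (Fin N)) n).indicator (fun _ => (n:ℝ≥0∞) ^ r') x := by
        apply lintegral_mono
        intro x
        simp only [hm, Set.indicator, mem_ball_zero_iff]
        split_ifs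
        · gcongr
          exact min_le_right _ _
        · simp; linarith
      refine ne_top_of_le_ne_top ?_ this
      rw [lintegral_indicator_const measurableSet_ball]
      refine ENNReal.mul_ne_top (ENNReal.rpow_ne_top_of_nonneg (by linarith) (by simp)) measure_ball_lt_top.ne
    rcases eq_or_ne J 0 with h0 | h0
    · rw [h0]; exact bot_le
    have hs0 : J ^ (1 / r) ≠ 0 := by simp [ENNReal.rpow_eq_zero_iff, h0, hJt]
    have hst : J ^ (1 / r) ≠ ∞ := ENNReal.rpow_ne_top_of_nonneg (by positivity) hJt
    have hkey := hB (fun x => m n x ^ (r' - 1)) h (by fun_prop) hh (J ^ (1 / r)) t hs0 hst ht0 htt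
      (by
        rw [← ENNReal.rpow_mul, one_div, inv_mul_cancel₀ (by linarith), ENNReal.rpow_one]
        simp_rw [← ENNReal.rpow_mul]
        rw [hconj.symm.sub_one_mul_conj]) ht
    have hle : J ≤ C * J ^ (1 / r) * t := by
      refine le_trans ?_ hkey
      apply lintegral_mono
      intro x
      dsimp only
      rw [lintegral_const_mul _ (by fun_prop)]
      calc m n x ^ r' = m n x ^ (r' - 1) * m n x ^ (1:ℝ) := by
            rw [← ENNReal.rpow_add_of_nonneg _ _ (by linarith) (by norm_num)]
            congr 1; ring
        _ ≤ m n x ^ (r' - 1) * H x := by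
            rw [ENNReal.rpow_one]
            gcongr
            exact hmH n x
    have hle2 : J ^ (1 / r) * J ^ (1 / r') ≤ J ^ (1 / r) * (C * t) := by
      rw [← ENNReal.rpow_add_of_nonneg _ _ (by positivity) (by positivity)]
      have : 1 / r + 1 / r' = 1 := by
        have := hconj.inv_add_inv_eq_one
        simpa using this
      rw [this, ENNReal.rpow_one]
      calc J ≤ _ := hle
        _ = _ := by ring
    have hle3 : J ^ (1 / r') ≤ C * t := (ENNReal.mul_le_mul_iff_right hs0 hst).1 hle2
    calc J = (J ^ (1 / r')) ^ r' := by
          rw [← ENNReal.rpow_mul, one_div, inv_mul_cancel₀ (by linarith), ENNReal.rpow_one]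
      _ ≤ _ := by gcongr
  have hlim : ∀ x, Tendsto (fun n => m n x ^ r') atTop (𝓝 (H x ^ r')) := by
    intro x
    refine (ENNReal.continuous_rpow_const.tendsto _).comp ?_
    have h1 : Tendsto (fun n : ℕ => min (H x) (n : ℝ≥0∞)) atTop (𝓝 (min (H x) ∞)) :=
      tendsto_const_nhds.min ENNReal.tendsto_nat_nhds_top
    rw [min_eq_left le_top] at h1
    refine h1.congr' ?_
    obtain ⟨k, hk⟩ := exists_nat_gt ‖x‖
    filter_upwards [eventually_ge_atTop k] with n hn
    have : ‖x‖ < n := hk.trans_le (by exact_mod_cast hn)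
    simp [hm, this]
  refine ne_top_of_le_ne_top (b := (C * t) ^ r') ?_ ?_
  · exact ENNReal.rpow_ne_top_of_nonneg (by linarith) (ENNReal.mul_ne_top hC htt)
  calc ∫⁻ x, H x ^ r' = ∫⁻ x, liminf (fun n => m n x ^ r') atTop :=
        lintegral_congr fun x => (hlim x).liminf_eq.symm
    _ ≤ liminf (fun n => ∫⁻ x, m n x ^ r') atTop := lintegral_liminf_le (fun n => by fun_prop)
    _ ≤ _ := by
      refine liminf_le_of_le (by isBoundedDefault) ?_
      intro b hb
      obtain ⟨n, hn⟩ := hb.exists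
      exact hn.trans (hJ n)

lemma weak_conv {Ω : Type*} [MeasurableSpace Ω] (μ : Measure Ω) (r r' : ℝ) (hconj : r.HolderConjugate r')
    (g : ℕ → Ω → ℝ≥0∞) (hg : ∀ n, Measurable (g n)) (H : Ω → ℝ≥0∞) (hH : Measurable H)
    (M : ℝ≥0∞) (hM : M ≠ ∞) (hgM : ∀ n, ∫⁻ x, g n x ^ r ∂μ ≤ M) (hHi : ∫⁻ x, H x ^ r' ∂μ ≠ ∞)
    (hlim : ∀ᵐ x ∂μ, Tendsto (fun n => g n x) atTop (𝓝 0)) :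
    Tendsto (fun n => ∫⁻ x, g n x * H x ∂μ) atTop (𝓝 0) := by
  have hr1 : 1 < r := hconj.lt
  have hr'1 : 1 < r' := hconj.symm.lt
  have hmul : (r - 1) * (r' - 1) = 1 := by
    have := hconj.mul_eq_add
    linarith
  rw [ENNReal.tendsto_nhds_zero]
  intro ε hε
  have hε2 : ε / 2 ≠ 0 := (ENNReal.half_pos hε.ne').ne'
  obtain ⟨η, hη0, hηt, hη⟩ := exists_small_mul M (ε / 2) hM hε2
  have hpt : ∀ n x, g n x * H x ≤ min (g n x) ((η⁻¹ * H x) ^ (r' - 1)) * H x + η * g n x ^ r := by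
    intro n x
    by_cases hc : H x ≤ η * g n x ^ (r - 1)
    · refine le_trans ?_ le_add_self
      calc g n x * H x ≤ g n x * (η * g n x ^ (r - 1)) := by gcongr
        _ = η * (g n x ^ (1:ℝ) * g n x ^ (r - 1)) := by rw [ENNReal.rpow_one]; ring
        _ = η * g n x ^ r := by
          rw [← ENNReal.rpow_add_of_nonneg _ _ (by norm_num) (by linarith)]
          congr 2; ring
    · refine le_trans ?_ le_self_add
      push Not at hc
      have h1 : g n x ^ (r - 1) ≤ η⁻¹ * H x := by
        calc g n x ^ (r - 1) = η⁻¹ * (η * g n x ^ (r - 1)) := by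
              rw [← mul_assoc, ENNReal.inv_mul_cancel hη0 hηt, one_mul]
          _ ≤ _ := by gcongr
      have h2 : g n x ≤ (η⁻¹ * H x) ^ (r' - 1) := by
        calc g n x = (g n x ^ (r - 1)) ^ (r' - 1) := by
              rw [← ENNReal.rpow_mul, hmul, ENNReal.rpow_one]
          _ ≤ _ := ENNReal.rpow_le_rpow h1 (by linarith)
      rw [min_eq_left h2]
  have hHfin : ∀ᵐ x ∂μ, H x ≠ ∞ := by
    have := ae_lt_top (by fun_prop : Measurable fun x => H x ^ r') hHi
    filter_upwards [this] with x hx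
    intro h
    rw [h, ENNReal.top_rpow_of_pos (by linarith)] at hx
    exact lt_irrefl _ hx
  have hdct : Tendsto (fun n => ∫⁻ x, min (g n x) ((η⁻¹ * H x) ^ (r' - 1)) * H x ∂μ) atTop
      (𝓝 (∫⁻ _, 0 ∂μ)) := by
    refine tendsto_lintegral_of_dominated_convergence (fun x => η⁻¹ ^ (r' - 1) * H x ^ r') ?_ ?_ ?_ ?_
    · intro n
      exact ((hg n).min (by fun_prop)).mul hH
    · intro n
      filter_upwards with x
      calc _ ≤ (η⁻¹ * H x) ^ (r' - 1) * H x := by gcongr; exact min_le_right _ _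
        _ = η⁻¹ ^ (r' - 1) * (H x ^ (r' - 1) * H x ^ (1:ℝ)) := by
          rw [ENNReal.mul_rpow_of_nonneg _ _ (by linarith), ENNReal.rpow_one]; ring
        _ = _ := by
          rw [← ENNReal.rpow_add_of_nonneg _ _ (by linarith) (by norm_num)]
          congr 2; ring
    · rw [lintegral_const_mul _ (by fun_prop)]
      exact ENNReal.mul_ne_top (ENNReal.rpow_ne_top_of_nonneg (by linarith) (by simpa using hη0)) hHi
    · filter_upwards [hlim, hHfin] with x hx hHx
      have : Tendsto (fun n => g n x * H x) atTop (𝓝 (0 * H x)) :=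
        ENNReal.Tendsto.mul_const hx (Or.inr hHx)
      rw [zero_mul] at this
      refine tendsto_of_tendsto_of_tendsto_of_le_of_le tendsto_const_nhds this (fun n => bot_le) ?_
      intro n
      dsimp only
      gcongr
      exact min_le_left _ _
  rw [lintegral_zero, ENNReal.tendsto_nhds_zero] at hdct
  filter_upwards [hdct (ε / 2) (pos_iff_ne_zero.2 hε2)] with n hn
  calc _ ≤ ∫⁻ x, (min (g n x) ((η⁻¹ * H x) ^ (r' - 1)) * H x + η * g n x ^ r) ∂μ :=
        lintegral_mono (hpt n)
    _ = (∫⁻ x, min (g n x) ((η⁻¹ * H x) ^ (r' - 1)) * H x ∂μ) + η * ∫⁻ x, g n x ^ r ∂μ := by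
        rw [lintegral_add_right _ (by have := hg n; fun_prop), lintegral_const_mul _ (by have := hg n; fun_prop)]
    _ ≤ ε / 2 + η * M := by gcongr; exact hgM n
    _ ≤ ε / 2 + ε / 2 := by gcongr
    _ = ε := ENNReal.add_halves ε

lemma bl_abstract {Ω : Type*} [MeasurableSpace Ω] (μ : Measure Ω) (r : ℝ) (hr1 : 1 < r)
    (e g : ℕ → Ω → ℝ≥0∞) (h : Ω → ℝ≥0∞) (he : ∀ n, Measurable (e n)) (hg : ∀ n, Measurable (g n))
    (hh : Measurable h)
    (M : ℝ≥0∞) (hM : M ≠ ∞) (hgM : ∀ n, ∫⁻ x, g n x ^ r ∂μ ≤ M) (hhi : ∫⁻ x, h x ^ r ∂μ ≠ ∞)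
    (hpt : ∀ ε : ℝ≥0∞, ε ≠ 0 → ε ≠ ∞ → ∃ C : ℝ≥0∞, C ≠ ∞ ∧ ∀ n x, e n x ≤ ε * g n x + C * h x)
    (hlim : ∀ᵐ x ∂μ, Tendsto (fun n => e n x) atTop (𝓝 0)) :
    Tendsto (fun n => ∫⁻ x, e n x ^ r ∂μ) atTop (𝓝 0) := by
  have hr0 : 0 < r := by linarith
  rw [ENNReal.tendsto_nhds_zero]
  intro ε hε
  have hε2 : ε / 2 ≠ 0 := (ENNReal.half_pos hε.ne').ne'
  have h2t : (2:ℝ≥0∞) ^ (r - 1) ≠ ∞ := ENNReal.rpow_ne_top_of_nonneg (by linarith) (by simp)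
  obtain ⟨η, hη0, hηt, hη⟩ := exists_small_mul (2 ^ (r - 1) * M) (ε / 2) (ENNReal.mul_ne_top h2t hM) hε2
  obtain ⟨C, hC, hb⟩ := hpt (η ^ (1 / r)) (by simp [ENNReal.rpow_eq_zero_iff, hη0, hηt])
    (ENNReal.rpow_ne_top_of_nonneg (by positivity) hηt)
  have hηr : (η ^ (1 / r)) ^ r = η := by
    rw [← ENNReal.rpow_mul, one_div, inv_mul_cancel₀ hr0.ne', ENNReal.rpow_one]
  set δ := η ^ (1 / r)
  have hmW : ∀ n, Measurable (fun x => (e n x - δ * g n x)) := fun n => by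
    have := he n; have := hg n; fun_prop
  have hle : ∀ n x, e n x ^ r ≤
      2 ^ (r - 1) * (e n x - δ * g n x) ^ r + η * 2 ^ (r - 1) * g n x ^ r := by
    intro n x
    calc e n x ^ r ≤ ((e n x - δ * g n x) + δ * g n x) ^ r := by
          gcongr; exact le_tsub_add
      _ ≤ 2 ^ (r - 1) * ((e n x - δ * g n x) ^ r + (δ * g n x) ^ r) :=
          ENNReal.rpow_add_le_mul_rpow_add_rpow _ _ hr1.le
      _ = _ := by rw [ENNReal.mul_rpow_of_nonneg _ _ hr0.le, hηr]; ring
  have hdct : Tendsto (fun n => ∫⁻ x, 2 ^ (r - 1) * (e n x - δ * g n x) ^ r ∂μ) atTop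
      (𝓝 (∫⁻ _, 0 ∂μ)) := by
    refine tendsto_lintegral_of_dominated_convergence (fun x => 2 ^ (r - 1) * (C ^ r * h x ^ r)) ?_ ?_ ?_ ?_
    · intro n
      have := hmW n
      fun_prop
    · intro n
      filter_upwards with x
      rw [← ENNReal.mul_rpow_of_nonneg _ _ hr0.le]
      gcongr
      rw [tsub_le_iff_left]
      exact hb n x
    · rw [lintegral_const_mul _ (by fun_prop), lintegral_const_mul _ (by fun_prop)]
      exact ENNReal.mul_ne_top h2t (ENNReal.mul_ne_top (ENNReal.rpow_ne_top_of_nonneg hr0.le hC) hhi)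
    · filter_upwards [hlim] with x hx
      have h1 : Tendsto (fun n => e n x ^ r) atTop (𝓝 (0 ^ r)) :=
        (ENNReal.continuous_rpow_const.tendsto _).comp hx
      have h2 : Tendsto (fun n => 2 ^ (r - 1) * e n x ^ r) atTop (𝓝 (2 ^ (r - 1) * 0 ^ r)) :=
        ENNReal.Tendsto.const_mul h1 (Or.inr h2t)
      rw [ENNReal.zero_rpow_of_pos hr0, mul_zero] at h2
      refine tendsto_of_tendsto_of_tendsto_of_le_of_le tendsto_const_nhds h2 (fun n => bot_le) ?_
      intro n
      dsimp only
      gcongr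
      exact tsub_le_self
  rw [lintegral_zero, ENNReal.tendsto_nhds_zero] at hdct
  filter_upwards [hdct (ε / 2) (pos_iff_ne_zero.2 hε2)] with n hn
  have := hg n
  calc _ ≤ ∫⁻ x, (2 ^ (r - 1) * (e n x - δ * g n x) ^ r + η * 2 ^ (r - 1) * g n x ^ r) ∂μ :=
        lintegral_mono (hle n)
    _ = (∫⁻ x, 2 ^ (r - 1) * (e n x - δ * g n x) ^ r ∂μ) + η * 2 ^ (r - 1) * ∫⁻ x, g n x ^ r ∂μ := by
        rw [lintegral_add_right _ (by fun_prop), lintegral_const_mul (η * 2 ^ (r - 1)) (by fun_prop)]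
    _ ≤ ε / 2 + η * 2 ^ (r - 1) * M := by gcongr; exact hgM n
    _ ≤ ε / 2 + ε / 2 := by gcongr; rw [mul_assoc]; exact hη
    _ = ε := ENNReal.add_halves ε

noncomputable def rB (N : ℕ) (α : ℝ) (f g : EuclideanSpace ℝ (Fin N) → ℝ≥0∞) : ℝ≥0∞ :=
  ∫⁻ x, ∫⁻ y, f x * (g y * rK N α (x - y))

lemma rB_symm (N : ℕ) (α : ℝ) (f g : EuclideanSpace ℝ (Fin N) → ℝ≥0∞) (hf : Measurable f)
    (hg : Measurable g) : rB N α f g = rB N α g f := by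
  have hK := rK_meas N α
  unfold rB
  rw [lintegral_lintegral_swap (by fun_prop)]
  refine lintegral_congr fun x => lintegral_congr fun y => ?_
  rw [rK_symm]; ring

lemma rB_tendsto (N : ℕ) (hN : 3 ≤ N) (α : ℝ) (hα0 : 0 < α) (hαN : α < N)
    (f e : ℕ → EuclideanSpace ℝ (Fin N) → ℝ≥0∞) (hf : ∀ n, Measurable (f n))
    (he : ∀ n, Measurable (e n)) (M : ℝ≥0∞) (hM : M ≠ ∞)
    (hfM : ∀ n, ∫⁻ x, f n x ^ (2 * N / (N + α)) ≤ M)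
    (hlim : Tendsto (fun n => ∫⁻ x, e n x ^ (2 * N / (N + α))) atTop (𝓝 0)) :
    Tendsto (fun n => rB N α (f n) (e n)) atTop (𝓝 0) := by
  obtain ⟨C, hC, hB⟩ := hls N hN α hα0 hαN
  have hr1 : 1 < 2 * N / (N + α) := (conj_exp N hN α hα0 hαN).lt
  set r := 2 * N / (N + α) with hr
  obtain ⟨s, hs0, hst, hs⟩ : ∃ t : ℝ≥0∞, t ≠ 0 ∧ t ≠ ∞ ∧ M ≤ t ^ r := by
    refine ⟨(M + 1) ^ (1 / r), ?_, ?_, ?_⟩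
    · simp [ENNReal.rpow_eq_zero_iff, hM]
    · exact ENNReal.rpow_ne_top_of_nonneg (by positivity) (by simp [hM])
    · rw [← ENNReal.rpow_mul, one_div, inv_mul_cancel₀ (by linarith), ENNReal.rpow_one]
      exact le_self_add
  rw [ENNReal.tendsto_nhds_zero] at hlim ⊢
  intro ε hε
  obtain ⟨t, ht0, htt, ht⟩ := exists_small_mul (C * s) ε (ENNReal.mul_ne_top hC hst) hε.ne'
  have htr : t ^ r ≠ 0 := by simp [ENNReal.rpow_eq_zero_iff, ht0, htt]
  filter_upwards [hlim (t ^ r) (pos_iff_ne_zero.2 htr)] with n hn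
  refine (hB (f n) (e n) (hf n) (he n) s t hs0 hst ht0 htt ((hfM n).trans hs) hn).trans ?_
  rw [mul_comm]; exact ht

/-- Nonlocal Brezis–Lieb lemma (Lemma 3.4 of the paper). -/
theorem nonlocal_brezis_lieb
    (N : ℕ) (hN : 3 ≤ N) (α p : ℝ) (hα0 : 0 < α) (hαN : α < N)
    (hp1 : 1 ≤ p) (hp2 : p < 2 * N / (N + α))
    (u : ℕ → EuclideanSpace ℝ (Fin N) → ℝ) (ulim : EuclideanSpace ℝ (Fin N) → ℝ)
    (hmeas : ∀ n, Measurable (u n)) (hulim : Measurable ulim)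
    (hbound : ∃ C : ℝ, ∀ n,
      ∫⁻ x, ENNReal.ofReal (|u n x| ^ (2 * N * p / (N + α))) ∂volume ≤ ENNReal.ofReal C)
    (hae : ∀ᵐ x ∂(volume : Measure (EuclideanSpace ℝ (Fin N))),
      Tendsto (fun n => u n x) atTop (𝓝 (ulim x))) :
    Tendsto (fun n =>
        ∫⁻ x, ENNReal.ofReal
          (|∫ y, (|u n y| ^ p * |u n x| ^ p
              - |u n y - ulim y| ^ p * |u n x - ulim x| ^ p
              - |ulim y| ^ p * |ulim x| ^ p) * ‖x - y‖ ^ (α - N) ∂volume|) ∂volume)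
      atTop (𝓝 0) := by
  obtain ⟨C, hC⟩ := hbound
  have hconj := conj_exp N hN α hα0 hαN
  have hr1 : 1 < 2 * N / (N + α) := hconj.lt
  have hK := rK_meas N α
  have hp0 : 0 < p := by linarith
  have hNα : (0:ℝ) < N + α := by linarith
  set f : ℕ → EuclideanSpace ℝ (Fin N) → ℝ≥0∞ := fun n x => ENNReal.ofReal (|u n x| ^ p) with hf
  set g : ℕ → EuclideanSpace ℝ (Fin N) → ℝ≥0∞ :=
    fun n x => ENNReal.ofReal (|u n x - ulim x| ^ p) with hg
  set h : EuclideanSpace ℝ (Fin N) → ℝ≥0∞ := fun x => ENNReal.ofReal (|ulim x| ^ p) with hh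
  set e : ℕ → EuclideanSpace ℝ (Fin N) → ℝ≥0∞ :=
    fun n x => ENNReal.ofReal (|(|u n x| ^ p - |u n x - ulim x| ^ p - |ulim x| ^ p)|) with he
  have hfm : ∀ n, Measurable (f n) := fun n => by have := hmeas n; fun_prop
  have hgm : ∀ n, Measurable (g n) := fun n => by have := hmeas n; fun_prop
  have hem : ∀ n, Measurable (e n) := fun n => by have := hmeas n; fun_prop
  have hhm : Measurable h := by fun_prop
  have hcp : Continuous (fun t : ℝ => |t| ^ p) :=
    continuous_abs.rpow_const (fun _ => Or.inr hp0.le)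
  have hfM : ∀ n, ∫⁻ x, f n x ^ (2 * N / (N + α)) ≤ ENNReal.ofReal C := by
    intro n
    refine le_trans (le_of_eq ?_) (hC n)
    refine lintegral_congr fun x => ?_
    simp only [hf]
    rw [ENNReal.ofReal_rpow_of_nonneg (by positivity) (by linarith), ← Real.rpow_mul (abs_nonneg _)]
    congr 2
    field_simp
  set r := 2 * N / (N + α) with hr
  have hhM : ∫⁻ x, h x ^ r ≤ ENNReal.ofReal C := by
    calc ∫⁻ x, h x ^ r = ∫⁻ x, liminf (fun n => f n x ^ r) atTop := by
          refine lintegral_congr_ae ?_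
          filter_upwards [hae] with x hx
          refine (Tendsto.liminf_eq ?_).symm
          exact (ENNReal.continuous_rpow_const.tendsto _).comp
            ((ENNReal.continuous_ofReal.tendsto _).comp ((hcp.tendsto _).comp hx))
      _ ≤ liminf (fun n => ∫⁻ x, f n x ^ r) atTop := 
          lintegral_liminf_le (fun n => by have := hfm n; fun_prop)
      _ ≤ _ := by
        refine liminf_le_of_le (by isBoundedDefault) ?_
        intro b hb
        obtain ⟨n, hn⟩ := hb.exists
        exact hn.trans (hfM n)
  have hhi : ∫⁻ x, h x ^ r ≠ ∞ := ne_top_of_le_ne_top ENNReal.ofReal_ne_top hhM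
  obtain ⟨M, hM, hgM⟩ : ∃ M : ℝ≥0∞, M ≠ ∞ ∧ ∀ n, ∫⁻ x, g n x ^ r ≤ M := by
    have h2 : ∀ q : ℝ, 1 ≤ q → (2:ℝ≥0∞) ^ (q - 1) ≠ ∞ := fun q hq =>
      ENNReal.rpow_ne_top_of_nonneg (by linarith) (by simp)
    refine ⟨((2:ℝ≥0∞) ^ (p - 1)) ^ r * (2 ^ (r - 1) * (ENNReal.ofReal C + ENNReal.ofReal C)), ?_, ?_⟩
    · refine ENNReal.mul_ne_top (ENNReal.rpow_ne_top_of_nonneg (by linarith) (h2 p hp1))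
        (ENNReal.mul_ne_top (h2 r hr1.le) (by simp))
    · intro n
      have := hfm n
      have hpt : ∀ x, g n x ^ r ≤ ((2:ℝ≥0∞) ^ (p - 1)) ^ r * (2 ^ (r - 1) * (f n x ^ r + h x ^ r)) := by
        intro x
        have h1 : g n x ≤ 2 ^ (p - 1) * (f n x + h x) := by
          simp only [hf, hg, hh]
          rw [← ENNReal.ofReal_rpow_of_nonneg (abs_nonneg _) hp0.le,
            ← ENNReal.ofReal_rpow_of_nonneg (abs_nonneg _) hp0.le,
            ← ENNReal.ofReal_rpow_of_nonneg (abs_nonneg _) hp0.le]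
          refine le_trans ?_ (ENNReal.rpow_add_le_mul_rpow_add_rpow _ _ hp1)
          rw [← ENNReal.ofReal_add (abs_nonneg _) (abs_nonneg _)]
          gcongr
          exact abs_sub _ _
        calc g n x ^ r ≤ (2 ^ (p - 1) * (f n x + h x)) ^ r := by gcongr
          _ = ((2:ℝ≥0∞) ^ (p - 1)) ^ r * (f n x + h x) ^ r := ENNReal.mul_rpow_of_nonneg _ _ (by linarith)
          _ ≤ _ := by gcongr; exact ENNReal.rpow_add_le_mul_rpow_add_rpow _ _ hr1.le
      calc _ ≤ ∫⁻ x, ((2:ℝ≥0∞) ^ (p - 1)) ^ r * (2 ^ (r - 1) * (f n x ^ r + h x ^ r)) := lintegral_mono hpt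
        _ = ((2:ℝ≥0∞) ^ (p - 1)) ^ r * (2 ^ (r - 1) * ((∫⁻ x, f n x ^ r) + ∫⁻ x, h x ^ r)) := by
          rw [lintegral_const_mul _ (by fun_prop), lintegral_const_mul _ (by fun_prop),
            lintegral_add_left (by fun_prop)]
        _ ≤ _ := by gcongr; exact hfM n
  have hglim : ∀ᵐ x ∂(volume : Measure (EuclideanSpace ℝ (Fin N))),
      Tendsto (fun n => g n x) atTop (𝓝 0) := by
    filter_upwards [hae] with x hx
    have h1 : Tendsto (fun n => u n x - ulim x) atTop (𝓝 0) := by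
      simpa using hx.sub_const (ulim x)
    have h2 := (ENNReal.continuous_ofReal.tendsto _).comp ((hcp.tendsto _).comp h1)
    simp [Real.zero_rpow hp0.ne'] at h2
    exact h2
  have helim : ∀ᵐ x ∂(volume : Measure (EuclideanSpace ℝ (Fin N))),
      Tendsto (fun n => e n x) atTop (𝓝 0) := by
    filter_upwards [hae] with x hx
    have hc : Continuous (fun t : ℝ => ENNReal.ofReal
        (|(|t| ^ p - |t - ulim x| ^ p - |ulim x| ^ p)|)) := by
      refine ENNReal.continuous_ofReal.comp (continuous_abs.comp ?_)
      exact (hcp.sub (hcp.comp (continuous_id.sub continuous_const))).sub continuous_const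
    have h2 := (hc.tendsto _).comp hx
    simp [Real.zero_rpow hp0.ne'] at h2
    exact h2
  have hE : Tendsto (fun n => ∫⁻ x, e n x ^ r) atTop (𝓝 0) := by
    refine bl_abstract volume r hr1 e g h hem hgm hhm M hM hgM hhi ?_ helim
    intro ε hε hεt
    obtain ⟨D, hD, hb⟩ := bl_pointwise_s2 p hp1 ε.toReal (ENNReal.toReal_pos hε hεt)
    refine ⟨ENNReal.ofReal D, ENNReal.ofReal_ne_top, fun n x => ?_⟩
    simp only [he, hg, hh]
    nth_rw 1 [← ENNReal.ofReal_toReal hεt]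
    rw [← ENNReal.ofReal_mul (by positivity), ← ENNReal.ofReal_mul hD,
      ← ENNReal.ofReal_add (by positivity) (by positivity)]
    exact ENNReal.ofReal_le_ofReal (hb _ _)
  have hW : Tendsto (fun n => rB N α (g n) h) atTop (𝓝 0) := by
    have hHm : Measurable (fun x => ∫⁻ y, h y * rK N α (x - y)) := by
      have : Measurable (fun q : EuclideanSpace ℝ (Fin N) × EuclideanSpace ℝ (Fin N) =>
        h q.2 * rK N α (q.1 - q.2)) := by fun_prop
      exact this.lintegral_prod_right'
    have := weak_conv volume r _ hconj g hgm _ hHm M hM hgM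
      (dual_bound N hN α hα0 hαN h hhm hhi) hglim
    refine this.congr fun n => ?_
    unfold rB
    refine lintegral_congr fun x => ?_
    rw [lintegral_const_mul _ (by fun_prop)]
  have hW' : Tendsto (fun n => rB N α h (g n)) atTop (𝓝 0) :=
    hW.congr fun n => rB_symm N α _ _ (hgm n) hhm
  have t1 := rB_tendsto N hN α hα0 hαN f e hfm hem _ ENNReal.ofReal_ne_top hfM hE
  have t2 : Tendsto (fun n => rB N α (e n) (g n)) atTop (𝓝 0) :=
    (rB_tendsto N hN α hα0 hαN g e hgm hem M hM hgM hE).congr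
      fun n => rB_symm N α _ _ (hgm n) (hem n)
  have t3 : Tendsto (fun n => rB N α (e n) h) atTop (𝓝 0) :=
    (rB_tendsto N hN α hα0 hαN (fun _ => h) e (fun _ => hhm) hem _ ENNReal.ofReal_ne_top
      (fun _ => hhM) hE).congr fun n => rB_symm N α _ _ hhm (hem n)
  have tsum := (((t1.add t2).add hW').add t3).add hW
  simp only [add_zero] at tsum
  refine tendsto_of_tendsto_of_tendsto_of_le_of_le tendsto_const_nhds tsum (fun n => bot_le) ?_
  intro n
  have hfn := hfm n
  have hgn := hgm n
  have hen := hem n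
  have mB : ∀ f g : EuclideanSpace ℝ (Fin N) → ℝ≥0∞, Measurable f → Measurable g →
      Measurable (fun x => ∫⁻ y, f x * (g y * rK N α (x - y))) := by
    intro f g hf hg
    have : Measurable (fun q : EuclideanSpace ℝ (Fin N) × EuclideanSpace ℝ (Fin N) =>
      f q.1 * (g q.2 * rK N α (q.1 - q.2))) := by fun_prop
    exact this.lintegral_prod_right'
  dsimp only [rB]
  rw [← lintegral_add_left (mB _ _ hfn hen), ← lintegral_add_right _ (mB _ _ hhm hgn),
    ← lintegral_add_right _ (mB _ _ hen hhm), ← lintegral_add_right _ (mB _ _ hgn hhm)]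
  refine lintegral_mono fun x => ?_
  dsimp only
  rw [← lintegral_add_left (by fun_prop), ← lintegral_add_right _ (by fun_prop),
    ← lintegral_add_right _ (by fun_prop), ← lintegral_add_right _ (by fun_prop)]
  rw [← Real.enorm_eq_ofReal_abs]
  refine (enorm_integral_le_lintegral_enorm _).trans (lintegral_mono fun y => ?_)
  rw [Real.enorm_eq_ofReal_abs, abs_mul, ENNReal.ofReal_mul (abs_nonneg _),
    abs_of_nonneg (by positivity : 0 ≤ ‖x - y‖ ^ (α - N)),
    show ENNReal.ofReal (‖x - y‖ ^ (α - N)) = rK N α (x - y) from rfl]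
  simp only [← mul_assoc, ← add_mul]
  gcongr
  simp only [hf, hg, hh, he]
  rw [← ENNReal.ofReal_mul (by positivity), ← ENNReal.ofReal_mul (by positivity),
    ← ENNReal.ofReal_mul (by positivity), ← ENNReal.ofReal_mul (by positivity),
    ← ENNReal.ofReal_mul (by positivity),
    ← ENNReal.ofReal_add (by positivity) (by positivity),
    ← ENNReal.ofReal_add (by positivity) (by positivity),
    ← ENNReal.ofReal_add (by positivity) (by positivity),
    ← ENNReal.ofReal_add (by positivity) (by positivity)]
  apply ENNReal.ofReal_le_ofReal
  have a1 : 0 ≤ |u n x| ^ p := by positivity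
  have a2 : 0 ≤ |u n y - ulim y| ^ p := by positivity
  have a3 : 0 ≤ |u n x - ulim x| ^ p := by positivity
  have a4 : 0 ≤ |ulim x| ^ p := by positivity
  have a5 : 0 ≤ |ulim y| ^ p := by positivity
  generalize |u n x| ^ p = A' at *
  generalize |u n y| ^ p = A at *
  generalize |u n y - ulim y| ^ p = G at *
  generalize |u n x - ulim x| ^ p = G' at *
  generalize |ulim x| ^ p = h' at *
  generalize |ulim y| ^ p = h0 at *
  have key : A * A' - G * G' - h0 * h' = A' * (A - G - h0) + (A' - G' - h') * G + h' * G
      + (A' - G' - h') * h0 + G' * h0 := by ring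
  rw [key]
  refine (abs_add_le _ _).trans (add_le_add ((abs_add_le _ _).trans (add_le_add
    ((abs_add_le _ _).trans (add_le_add ((abs_add_le _ _).trans (add_le_add ?_ ?_)) ?_)) ?_)) ?_)
  all_goals rw [abs_mul]
  · rw [abs_of_nonneg a1]
  · rw [abs_of_nonneg a2]
  · rw [abs_of_nonneg a2, abs_of_nonneg a4]
  · rw [abs_of_nonneg a5]
  · rw [abs_of_nonneg a3, abs_of_nonneg a5]
end

section
/- Let N ≥ 3 be an integer and let α, p, q, γ be real numbers with α ∈ (0,N), p > 1, q > 1, γ < (N+2)/2, p ≥ (N+α)/(N−2) and (N+α)/p ≤ (N+2−2γ)/q. Then there exist no real numbers G ≥ 0, U > 0, A ≥ 0 and B with B ≥ −γA such that ((N−2)/2)·G + (N/2)·U + ((N+2)/(2q))·A + (1/q)·B = ((N+α)/(2p))·(G + U + A). -/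
/-- Algebraic core of the nonexistence Theorem 2.1(i) of the paper. -/
theorem pohozaev_nonexistence_i
    (N : ℕ) (hN : 3 ≤ N) (α p q γ : ℝ)
    (hα0 : 0 < α) (hαN : α < N) (hp : 1 < p) (hq : 1 < q)
    (hγ : γ < (N + 2) / 2)
    (hp2 : (N + α) / (N - 2) ≤ p)
    (hpq : (N + α) / p ≤ (N + 2 - 2 * γ) / q) :
    ¬ ∃ G U A B : ℝ, 0 ≤ G ∧ 0 < U ∧ 0 ≤ A ∧ -γ * A ≤ B ∧
      ((N - 2) / 2) * G + ((N : ℝ) / 2) * U + ((N + 2) / (2 * q)) * A + (1 / q) * B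
        = ((N + α) / (2 * p)) * (G + U + A) := by
  rintro ⟨G, U, A, B, hG, hU, hA, hB, h⟩
  have hN' : (3 : ℝ) ≤ N := by exact_mod_cast hN
  have hp0 : 0 < p := by linarith
  have hq0 : 0 < q := by linarith
  have hc : (N + α) / p ≤ N - 2 := by
    rw [div_le_iff₀ (by linarith)] at hp2
    rw [div_le_iff₀ hp0]
    linarith
  have e1 : (N + α) / (2 * p) = ((N + α) / p) / 2 := by field_simp
  have e2 : ((N : ℝ) + 2) / (2 * q) * A + (1 / q) * B
      = ((N + 2 - 2 * γ) / q) / 2 * A + (1 / q) * (B + γ * A) := by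
    field_simp
    ring
  have h3 : 0 ≤ (1 / q) * (B + γ * A) := mul_nonneg (by positivity) (by linarith)
  rw [e1] at h
  have h4 := mul_le_mul_of_nonneg_right hc hG
  have h5 := mul_le_mul_of_nonneg_right hc hU.le
  have h6 := mul_le_mul_of_nonneg_right hpq hA
  generalize (N + α) / p = c at *
  generalize ((N : ℝ) + 2 - 2 * γ) / q = d at *
  linarith
end

section
/- Let N ≥ 1 be an integer and let u : ℝ^N → ℝ be a smooth (C^∞) function with compact support. Define v : ℝ^N → ℝ by v(x) = ⟨x, ∇u(x)⟩. Then ∫_{ℝ^N} ⟨∇u(x), ∇v(x)⟩ dx = −((N−2)/2) ∫_{ℝ^N} ‖∇u(x)‖² dx. -/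
open MeasureTheory

lemma integral_fderiv_self_aux (N : ℕ) (w : EuclideanSpace ℝ (Fin N) → ℝ)
    (hw : ContDiff ℝ 1 w) (hs : HasCompactSupport w) :
    Integrable (fun x => fderiv ℝ w x x) ∧
    ∫ x, fderiv ℝ w x x = -(N : ℝ) * ∫ x, w x := by
  have hdc : Continuous (fderiv ℝ w) := hw.continuous_fderiv one_ne_zero
  have hds : HasCompactSupport (fderiv ℝ w) := hs.fderiv ℝ
  have key : ∀ x, fderiv ℝ w x x
      = ∑ i, x i * fderiv ℝ w x (EuclideanSpace.single i 1) := by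
    intro x
    have hx : x = ∑ i, x i • EuclideanSpace.single i (1 : ℝ) := by
      have := (EuclideanSpace.basisFun (Fin N) ℝ).sum_repr x
      simpa using this.symm
    have h := congrArg (fderiv ℝ w x) hx
    rw [map_sum] at h
    simpa only [map_smul, smul_eq_mul] using h
  have hint : ∀ i : Fin N, Integrable
      (fun x : EuclideanSpace ℝ (Fin N) => x i * fderiv ℝ w x (EuclideanSpace.single i 1)) := by
    intro i
    apply Continuous.integrable_of_hasCompactSupport
    · fun_prop
    · refine hds.mono' ?_
      refine subset_trans ?_ subset_closure
      intro x hx h0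
      apply hx
      simp [h0]
  have hwint : Integrable w := hw.continuous.integrable_of_hasCompactSupport hs
  have hi : ∀ i : Fin N, ∫ x : EuclideanSpace ℝ (Fin N),
      x i * fderiv ℝ w x (EuclideanSpace.single i 1) = - ∫ x, w x := by
    intro i
    have hp : ∀ x : EuclideanSpace ℝ (Fin N),
        fderiv ℝ (fun y : EuclideanSpace ℝ (Fin N) => y i) x (EuclideanSpace.single i 1) = 1 := by
      intro x
      have : HasFDerivAt (fun y : EuclideanSpace ℝ (Fin N) => y i)
        (EuclideanSpace.proj i : EuclideanSpace ℝ (Fin N) →L[ℝ] ℝ) x :=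
        (EuclideanSpace.proj i : EuclideanSpace ℝ (Fin N) →L[ℝ] ℝ).hasFDerivAt
      rw [this.fderiv]
      simp
    rw [integral_mul_fderiv_eq_neg_fderiv_mul_of_integrable
      (f := fun y : EuclideanSpace ℝ (Fin N) => y i) (g := w)]
    · simp [hp]
    · simpa [hp] using hwint
    · exact hint i
    · apply Continuous.integrable_of_hasCompactSupport
      · have := hw.continuous
        fun_prop
      · exact hs.mul_left
    · intro x _
      fun_prop
    · intro x _
      exact hw.differentiable one_ne_zero x
  constructor
  · simp_rw [key]
    exact integrable_finsetSum _ fun i _ => hint i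
  · simp_rw [key]
    rw [integral_finsetSum _ fun i _ => hint i]
    simp [hi]

/-- ∫ ∇u·∇v = −((N−2)/2) ∫ ‖∇u‖², where v(x) = x·∇u(x), for smooth compactly
supported u (Pohozaev identity computation, Proposition 4.1 of the paper). -/
theorem integral_grad_u_dot_grad_v
    (N : ℕ) (hN : 1 ≤ N) (u : EuclideanSpace ℝ (Fin N) → ℝ)
    (hu : ContDiff ℝ (⊤ : ℕ∞) u) (hsupp : HasCompactSupport u)
    (v : EuclideanSpace ℝ (Fin N) → ℝ)
    (hv : ∀ x, v x = (inner ℝ x (gradient u x) : ℝ)) :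
    ∫ x, (inner ℝ (gradient u x) (gradient v x) : ℝ) ∂volume
      = -(((N : ℝ) - 2) / 2) * ∫ x, ‖gradient u x‖ ^ 2 ∂volume := by
  have hu2 : ContDiff ℝ 2 u := contDiff_infty.1 hu 2
  have hD : ContDiff ℝ 1 (fderiv ℝ u) := hu2.fderiv_right (by norm_num)
  have hG : ContDiff ℝ 1 (gradient u) :=
    (InnerProductSpace.toDual ℝ (EuclideanSpace ℝ (Fin N))).symm.contDiff.comp hD
  have hGs : HasCompactSupport (gradient u) := by
    refine (hsupp.fderiv ℝ).mono ?_
    intro x hx h0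
    apply hx
    simp [gradient, h0]
  have hwC : ContDiff ℝ 1 (fun x => ‖gradient u x‖ ^ 2) := hG.norm_sq ℝ
  have hws : HasCompactSupport (fun x => ‖gradient u x‖ ^ 2) := by
    refine hGs.mono ?_
    intro x hx h0
    apply hx
    simp [h0]
  obtain ⟨h1, h2⟩ := integral_fderiv_self_aux N _ hwC hws
  have hv' : v = fun x => fderiv ℝ u x x := by
    funext x
    rw [hv, real_inner_comm, inner_gradient_left]
  have hpt : ∀ x, (inner ℝ (gradient u x) (gradient v x) : ℝ)
      = (1 / 2) * fderiv ℝ (fun x => ‖gradient u x‖ ^ 2) x x + ‖gradient u x‖ ^ 2 := by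
    intro x
    have hDx : DifferentiableAt ℝ (fderiv ℝ u) x := hD.differentiable one_ne_zero x
    have hGx : DifferentiableAt ℝ (gradient u) x := hG.differentiable one_ne_zero x
    have hsym : IsSymmSndFDerivAt ℝ u x :=
      hu2.contDiffAt.isSymmSndFDerivAt (by simp)
    rw [real_inner_comm, inner_gradient_left, hv']
    have e1 : HasFDerivAt (fun x => fderiv ℝ u x x) _ x :=
      hDx.hasFDerivAt.clm_apply (hasFDerivAt_id x)
    have e2 : HasFDerivAt (fun x => ‖gradient u x‖ ^ 2) _ x := hGx.hasFDerivAt.norm_sq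
    rw [e1.fderiv, e2.fderiv]
    have e3 : ∀ y, inner ℝ (fderiv ℝ (gradient u) x x) y = fderiv ℝ (fderiv ℝ u) x x y := by
      intro y
      have a1 : HasFDerivAt (fun z => inner ℝ (gradient u z) y) _ x :=
        hGx.hasFDerivAt.inner ℝ (hasFDerivAt_const y x)
      have a2 : HasFDerivAt (fun z => fderiv ℝ u z y) _ x :=
        hDx.hasFDerivAt.clm_apply (hasFDerivAt_const y x)
      simp only [inner_gradient_left] at a1
      have := DFunLike.congr_fun (a1.unique a2) x
      simpa using this
    have e4 := e3 (gradient u x)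
    rw [real_inner_comm] at e4
    have e5 := hsym.eq x (gradient u x)
    have e6 : fderiv ℝ u x (gradient u x) = ‖gradient u x‖ ^ 2 := by
      rw [← inner_gradient_left, real_inner_self_eq_norm_sq]
    simp [e4, e5, e6]
    ring
  simp_rw [hpt]
  rw [integral_add (h1.const_mul _) (hwC.continuous.integrable_of_hasCompactSupport hws),
    integral_const_mul, h2]
  ring
end

section
/- Let N ≥ 3 be an integer, α ∈ (0,N) a real number, and let w : ℝ^N → ℝ be a continuously differentiable function with compact support. Then ∫_{ℝ^N} ∫_{ℝ^N} |x − y|^{α−N} w(y) ⟨x, ∇w(x)⟩ dy dx = −((N+α)/2) ∫_{ℝ^N} ∫_{ℝ^N} |x − y|^{α−N} w(x) w(y) dy dx. -/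
open MeasureTheory

/-- Local integrability of the Riesz kernel on balls. -/
lemma riesz_kernel_integrableOn (N : ℕ) (hN : 3 ≤ N) (α : ℝ) (hα0 : 0 < α) (r : ℝ) :
    IntegrableOn (fun x : EuclideanSpace ℝ (Fin N) => ‖x‖ ^ (α - N)) (Metric.ball 0 r) volume := by
  have : Nonempty (Fin N) := ⟨⟨0, by omega⟩⟩
  have : Nontrivial (EuclideanSpace ℝ (Fin N)) := inferInstance
  rcases le_or_gt r 0 with hr | hr
  · rw [Metric.ball_eq_empty.2 hr]; exact integrableOn_empty
  rw [integrableOn_fun_norm_addHaar (f := fun t : ℝ => t ^ (α - N)) volume]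
  have h1 : IntegrableOn (fun y : ℝ => y ^ (α - 1)) (Set.Ioo 0 r) :=
    (intervalIntegral.integrableOn_Ioo_rpow_iff hr).2 (by linarith)
  refine h1.congr_fun ?_ measurableSet_Ioo
  intro y hy
  have hy0 : 0 < y := hy.1
  simp only [finrank_euclideanSpace, Fintype.card_fin, smul_eq_mul]
  rw [← Real.rpow_natCast, ← Real.rpow_add hy0]
  congr 1
  rw [Nat.cast_sub (by omega)]
  push_cast
  ring

lemma riesz_bound_integrable (N : ℕ) (hN : 3 ≤ N) (α : ℝ) (hα0 : 0 < α) (r : ℝ) :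
    Integrable (fun p : EuclideanSpace ℝ (Fin N) × EuclideanSpace ℝ (Fin N) =>
      (Metric.ball 0 r).indicator (fun _ => (1 : ℝ)) p.2 *
        (Metric.ball 0 (r + r)).indicator
          (fun x : EuclideanSpace ℝ (Fin N) => ‖x‖ ^ (α - N)) (p.1 - p.2))
      ((volume : Measure (EuclideanSpace ℝ (Fin N))).prod volume) := by
  have h1 : Integrable ((Metric.ball (0 : EuclideanSpace ℝ (Fin N)) r).indicator
      (fun _ => (1 : ℝ))) volume := by
    rw [integrable_indicator_iff measurableSet_ball]
    exact integrableOn_const measure_ball_lt_top.ne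
  have h2 := (integrable_indicator_iff measurableSet_ball).2
    (riesz_kernel_integrableOn N hN α hα0 (r + r))
  exact h1.convolution_integrand (ContinuousLinearMap.mul ℝ ℝ) h2

lemma riesz_pointwise_bound (N : ℕ) (α r C : ℝ) (x y : EuclideanSpace ℝ (Fin N)) (a b : ℝ)
    (ha : |a| ≤ C) (hb : |b| ≤ C) (ha' : r ≤ ‖x‖ → a = 0) (hb' : r ≤ ‖y‖ → b = 0) :
    |‖x - y‖ ^ (α - N) * a * b| ≤ C * C *
      ((Metric.ball 0 r).indicator (fun _ => (1 : ℝ)) y *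
        (Metric.ball 0 (r + r)).indicator
          (fun x : EuclideanSpace ℝ (Fin N) => ‖x‖ ^ (α - N)) (x - y)) := by
  have hK : ∀ z : EuclideanSpace ℝ (Fin N), 0 ≤ ‖z‖ ^ (α - N) := fun z =>
    Real.rpow_nonneg (norm_nonneg _) _
  have hC : 0 ≤ C := (abs_nonneg a).trans ha
  have hpos : 0 ≤ C * C *
      ((Metric.ball 0 r).indicator (fun _ => (1 : ℝ)) y *
        (Metric.ball 0 (r + r)).indicator
          (fun x : EuclideanSpace ℝ (Fin N) => ‖x‖ ^ (α - N)) (x - y)) := by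
    refine mul_nonneg (mul_nonneg hC hC) (mul_nonneg ?_ ?_)
    · exact Set.indicator_nonneg (fun _ _ => zero_le_one) _
    · exact Set.indicator_nonneg (fun z _ => hK z) _
  rcases le_or_gt r ‖x‖ with hx | hx
  · rw [ha' hx]; simpa using hpos
  rcases le_or_gt r ‖y‖ with hy | hy
  · rw [hb' hy]; simpa using hpos
  have hxy : x - y ∈ Metric.ball (0 : EuclideanSpace ℝ (Fin N)) (r + r) := by
    rw [mem_ball_zero_iff]; exact (norm_sub_le x y).trans_lt (by linarith)
  have hy2 : y ∈ Metric.ball (0 : EuclideanSpace ℝ (Fin N)) r := by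
    rwa [mem_ball_zero_iff]
  rw [Set.indicator_of_mem hxy, Set.indicator_of_mem hy2, abs_mul, abs_mul,
    abs_of_nonneg (hK _)]
  have : |a| * |b| ≤ C * C := mul_le_mul ha hb (abs_nonneg _) hC
  nlinarith [mul_le_mul_of_nonneg_left this (hK (x - y))]

lemma riesz_measurable (N : ℕ) (α : ℝ) (f g : EuclideanSpace ℝ (Fin N) → ℝ)
    (hf : Continuous f) (hg : Continuous g) :
    Measurable (fun p : EuclideanSpace ℝ (Fin N) × EuclideanSpace ℝ (Fin N) =>
      ‖p.1 - p.2‖ ^ (α - N) * f p.1 * g p.2) := by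
  have h1 : Measurable (fun p : EuclideanSpace ℝ (Fin N) × EuclideanSpace ℝ (Fin N) =>
      ‖p.1 - p.2‖) := (by fun_prop : Continuous _).measurable
  have h2 := hf.measurable.comp (measurable_fst :
    Measurable (Prod.fst : EuclideanSpace ℝ (Fin N) × EuclideanSpace ℝ (Fin N) → EuclideanSpace ℝ (Fin N)))
  have h3 := hg.measurable.comp (measurable_snd :
    Measurable (Prod.snd : EuclideanSpace ℝ (Fin N) × EuclideanSpace ℝ (Fin N) → EuclideanSpace ℝ (Fin N)))
  exact ((h1.pow_const _).mul h2).mul h3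

lemma riesz_scaling (N : ℕ) (α : ℝ) (w : EuclideanSpace ℝ (Fin N) → ℝ) (t : ℝ) (ht : 0 < t) :
    ∫ p : EuclideanSpace ℝ (Fin N) × EuclideanSpace ℝ (Fin N),
      ‖p.1 - p.2‖ ^ (α - N) * w (t • p.1) * w (t • p.2) ∂((volume : Measure (EuclideanSpace ℝ (Fin N))).prod volume) =
    t ^ (-((N : ℝ) + α)) * ∫ p : EuclideanSpace ℝ (Fin N) × EuclideanSpace ℝ (Fin N),
      ‖p.1 - p.2‖ ^ (α - N) * w p.1 * w p.2
      ∂((volume : Measure (EuclideanSpace ℝ (Fin N))).prod volume) := by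
  have h := Measure.integral_comp_smul
    ((volume : Measure (EuclideanSpace ℝ (Fin N))).prod volume)
    (fun p => ‖p.1 - p.2‖ ^ (α - N) * w p.1 * w p.2) t
  have h2 : ∀ p : EuclideanSpace ℝ (Fin N) × EuclideanSpace ℝ (Fin N),
      ‖p.1 - p.2‖ ^ (α - N) * w (t • p.1) * w (t • p.2) = t ^ ((N : ℝ) - α) *
      (‖(t • p).1 - (t • p).2‖ ^ (α - N) * w (t • p).1 * w (t • p).2) := by
    intro p
    rw [Prod.smul_fst, Prod.smul_snd, ← smul_sub, norm_smul, Real.norm_of_nonneg ht.le,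
      Real.mul_rpow ht.le (norm_nonneg _)]
    have : t ^ ((N : ℝ) - α) * t ^ (α - N) = 1 := by
      rw [← Real.rpow_add ht]; simp
    linear_combination (-(‖p.1 - p.2‖ ^ (α - N) * w (t • p.1) * w (t • p.2))) * this
  simp_rw [h2]
  rw [integral_const_mul, h, smul_eq_mul, ← mul_assoc]
  congr 1
  rw [abs_of_nonneg (by positivity), Module.finrank_prod, finrank_euclideanSpace,
    Fintype.card_fin, ← Real.rpow_natCast, ← Real.rpow_neg ht.le, ← Real.rpow_add ht]
  congr 1
  push_cast
  ring

/-- Symmetrization identity for the Riesz kernel: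
∫∫ |x−y|^{α−N} w(y) (x·∇w(x)) = −((N+α)/2) ∫∫ |x−y|^{α−N} w(x) w(y),
for C¹ compactly supported w (Proposition 4.1 of the paper). -/
theorem riesz_kernel_pohozaev
    (N : ℕ) (hN : 3 ≤ N) (α : ℝ) (hα0 : 0 < α) (hαN : α < N)
    (w : EuclideanSpace ℝ (Fin N) → ℝ)
    (hw : ContDiff ℝ 1 w) (hsupp : HasCompactSupport w) :
    ∫ x, ∫ y, ‖x - y‖ ^ (α - N) * w y * (inner ℝ x (gradient w x) : ℝ) ∂volume ∂volume
      = -(((N : ℝ) + α) / 2) * ∫ x, ∫ y, ‖x - y‖ ^ (α - N) * w x * w y ∂volume ∂volume := by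
  classical
  set D : EuclideanSpace ℝ (Fin N) → ℝ := fun x => fderiv ℝ w x x with hD
  have hwc : Continuous w := hw.continuous
  have hfc : Continuous (fderiv ℝ w) := hw.continuous_fderiv one_ne_zero
  have hdiff : Differentiable ℝ w := hw.differentiable one_ne_zero
  have hDc : Continuous D := hfc.clm_apply continuous_id
  have hgrad : ∀ x : EuclideanSpace ℝ (Fin N), (inner ℝ x (gradient w x) : ℝ) = D x := by
    intro x
    have h := congrArg (fun L => L x) (toDual_gradient (𝕜 := ℝ) (f := w) (x := x))
    simp only [InnerProductSpace.toDual_apply_apply] at h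
    rw [real_inner_comm]
    exact h
  obtain ⟨C0, hC0⟩ := hsupp.exists_bound_of_continuous hwc
  obtain ⟨C1, hC1⟩ := (hsupp.fderiv ℝ).exists_bound_of_continuous hfc
  obtain ⟨R, hR0, hR⟩ := hsupp.isCompact.isBounded.subset_ball_lt 0 0
  have hwz : ∀ x : EuclideanSpace ℝ (Fin N), R ≤ ‖x‖ → w x = 0 := fun x hx => by
    apply image_eq_zero_of_notMem_tsupport
    intro h
    have := hR h
    rw [mem_ball_zero_iff] at this
    linarith
  have hfz : ∀ x : EuclideanSpace ℝ (Fin N), R ≤ ‖x‖ → fderiv ℝ w x = 0 := fun x hx => by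
    apply image_eq_zero_of_notMem_tsupport
    intro h
    have := hR (tsupport_fderiv_subset ℝ h)
    rw [mem_ball_zero_iff] at this
    linarith
  have hC0' : 0 ≤ C0 := (norm_nonneg _).trans (hC0 0)
  have hC1' : 0 ≤ C1 := (norm_nonneg _).trans (hC1 0)
  set r : ℝ := 2 * R with hr
  set C : ℝ := C0 + C1 * r with hC
  have hC1r : 0 ≤ C1 * r := by positivity
  have hbig : ∀ t ∈ Set.Ioo (1 / 2 : ℝ) 2, ∀ x : EuclideanSpace ℝ (Fin N), r ≤ ‖x‖ → R ≤ ‖t • x‖ := by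
    intro t ht x hx
    rw [norm_smul, Real.norm_of_nonneg (by linarith [ht.1])]
    nlinarith [ht.1, norm_nonneg x]
  have hb0 : ∀ t : ℝ, ∀ x : EuclideanSpace ℝ (Fin N), |w (t • x)| ≤ C := fun t x => by
    have := hC0 (t • x)
    rw [Real.norm_eq_abs] at this
    linarith
  have hb1z : ∀ t ∈ Set.Ioo (1 / 2 : ℝ) 2, ∀ x : EuclideanSpace ℝ (Fin N), r ≤ ‖x‖ → fderiv ℝ w (t • x) x = 0 := by
    intro t ht x hx
    rw [hfz _ (hbig t ht x hx)]; rfl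
  have hb1 : ∀ t ∈ Set.Ioo (1 / 2 : ℝ) 2, ∀ x : EuclideanSpace ℝ (Fin N), |fderiv ℝ w (t • x) x| ≤ C := by
    intro t ht x
    rcases le_or_gt r ‖x‖ with hx | hx
    · rw [hb1z t ht x hx, abs_zero]; positivity
    · have h1 := (fderiv ℝ w (t • x)).le_opNorm x
      rw [Real.norm_eq_abs] at h1
      have h2 : ‖fderiv ℝ w (t • x)‖ * ‖x‖ ≤ C1 * r :=
        mul_le_mul (hC1 _) hx.le (norm_nonneg _) hC1'
      linarith
  have hb0z : ∀ t ∈ Set.Ioo (1 / 2 : ℝ) 2, ∀ x : EuclideanSpace ℝ (Fin N), r ≤ ‖x‖ → w (t • x) = 0 :=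
    fun t ht x hx => hwz _ (hbig t ht x hx)
  have h1mem : (1 : ℝ) ∈ Set.Ioo (1 / 2 : ℝ) 2 := by constructor <;> norm_num
  have hBI := (riesz_bound_integrable N hN α hα0 r).const_mul (C * C)
  -- integrability
  have hint : ∀ f g : EuclideanSpace ℝ (Fin N) → ℝ, Continuous f → Continuous g → (∀ x, |f x| ≤ C) → (∀ x, |g x| ≤ C) →
      (∀ x, r ≤ ‖x‖ → f x = 0) → (∀ x, r ≤ ‖x‖ → g x = 0) →
      Integrable (fun p : EuclideanSpace ℝ (Fin N) × EuclideanSpace ℝ (Fin N) => ‖p.1 - p.2‖ ^ (α - N) * f p.1 * g p.2)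
        ((volume : Measure (EuclideanSpace ℝ (Fin N))).prod volume) := by
    intro f g hf hg h1 h2 h3 h4
    refine hBI.mono' (riesz_measurable N α f g hf hg).aestronglyMeasurable
      (Filter.Eventually.of_forall fun p => ?_)
    exact riesz_pointwise_bound N α r C p.1 p.2 _ _ (h1 _) (h2 _) (h3 _) (h4 _)
  have hw1 : ∀ x, |w x| ≤ C := fun x => by simpa using hb0 1 x
  have hw2 : ∀ x, r ≤ ‖x‖ → w x = 0 := fun x hx => by simpa using hb0z 1 h1mem x hx
  have hD1 : ∀ x, |D x| ≤ C := fun x => by simpa using hb1 1 h1mem x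
  have hD2 : ∀ x, r ≤ ‖x‖ → D x = 0 := fun x hx => by simpa using hb1z 1 h1mem x hx
  have hI1 := hint w w hwc hwc hw1 hw1 hw2 hw2
  have hI2 := hint D w hDc hwc hD1 hw1 hD2 hw2
  have hI3 := hint w D hwc hDc hw1 hD1 hw2 hD2
  have key := hasDerivAt_integral_of_dominated_loc_of_deriv_le
    (μ := (volume : Measure (EuclideanSpace ℝ (Fin N))).prod volume) (x₀ := (1 : ℝ)) (s := Set.Ioo (1 / 2 : ℝ) 2)
    (F := fun t p => ‖p.1 - p.2‖ ^ (α - N) * w (t • p.1) * w (t • p.2))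
    (F' := fun t p => ‖p.1 - p.2‖ ^ (α - N) * fderiv ℝ w (t • p.1) p.1 * w (t • p.2) +
      ‖p.1 - p.2‖ ^ (α - N) * w (t • p.1) * fderiv ℝ w (t • p.2) p.2)
    (Ioo_mem_nhds h1mem.1 h1mem.2)
    (Filter.Eventually.of_forall fun t =>
      (riesz_measurable N α (fun x => w (t • x)) (fun x => w (t • x))
        (by fun_prop) (by fun_prop)).aestronglyMeasurable)
    (by simpa using hI1)
    (by simp only [one_smul]; exact (hI2.add hI3).aestronglyMeasurable)
    (Filter.Eventually.of_forall fun p t ht => by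
      refine (norm_add_le _ _).trans (add_le_add
        (riesz_pointwise_bound N α r C p.1 p.2 _ _ (hb1 t ht _) (hb0 t _)
          (hb1z t ht _) (hb0z t ht _))
        (riesz_pointwise_bound N α r C p.1 p.2 _ _ (hb0 t _) (hb1 t ht _)
          (hb0z t ht _) (hb1z t ht _))))
    (hBI.add hBI)
    (Filter.Eventually.of_forall fun p t ht => by
      have hd : ∀ x : EuclideanSpace ℝ (Fin N), HasDerivAt (fun t : ℝ => w (t • x)) (fderiv ℝ w (t • x) x) t := by
        intro x
        have h1 : HasDerivAt (fun t : ℝ => t • x) x t := by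
          simpa using (hasDerivAt_id t).smul_const x
        exact (hdiff (t • x)).hasFDerivAt.comp_hasDerivAt t h1
      exact ((hd p.1).const_mul _).mul (hd p.2))
  have hder := key.2
  simp only [one_smul] at hder
  rw [integral_add hI2 hI3] at hder
  have hswap : ∫ p : EuclideanSpace ℝ (Fin N) × EuclideanSpace ℝ (Fin N), ‖p.1 - p.2‖ ^ (α - N) * w p.1 * D p.2 ∂((volume : Measure (EuclideanSpace ℝ (Fin N))).prod volume)
      = ∫ p : EuclideanSpace ℝ (Fin N) × EuclideanSpace ℝ (Fin N), ‖p.1 - p.2‖ ^ (α - N) * D p.1 * w p.2 ∂((volume : Measure (EuclideanSpace ℝ (Fin N))).prod volume) := by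
    rw [← integral_prod_swap]
    refine integral_congr_ae (Filter.Eventually.of_forall fun p => ?_)
    simp only [Prod.fst_swap, Prod.snd_swap]
    rw [norm_sub_rev]
    ring
  set I := ∫ p : EuclideanSpace ℝ (Fin N) × EuclideanSpace ℝ (Fin N), ‖p.1 - p.2‖ ^ (α - N) * w p.1 * w p.2 ∂((volume : Measure (EuclideanSpace ℝ (Fin N))).prod volume)
    with hIdef
  have hder2 : HasDerivAt (fun t : ℝ => ∫ p : EuclideanSpace ℝ (Fin N) × EuclideanSpace ℝ (Fin N),
      ‖p.1 - p.2‖ ^ (α - N) * w (t • p.1) * w (t • p.2) ∂((volume : Measure (EuclideanSpace ℝ (Fin N))).prod volume))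
      (-((N : ℝ) + α) * I) 1 := by
    have h1 : HasDerivAt (fun t : ℝ => t ^ (-((N : ℝ) + α)) * I) (-((N : ℝ) + α) * I) 1 := by
      have := (Real.hasDerivAt_rpow_const (x := 1) (p := -((N : ℝ) + α))
        (Or.inl one_ne_zero)).mul_const I
      simpa using this
    refine h1.congr_of_eventuallyEq ?_
    filter_upwards [Ioo_mem_nhds h1mem.1 h1mem.2] with t ht
    exact riesz_scaling N α w t (by linarith [ht.1])
  have huniq := hder.unique hder2
  have hL : ∫ x : EuclideanSpace ℝ (Fin N), ∫ y : EuclideanSpace ℝ (Fin N), ‖x - y‖ ^ (α - N) * w y * (inner ℝ x (gradient w x) : ℝ) =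
      ∫ p : EuclideanSpace ℝ (Fin N) × EuclideanSpace ℝ (Fin N), ‖p.1 - p.2‖ ^ (α - N) * D p.1 * w p.2 ∂((volume : Measure (EuclideanSpace ℝ (Fin N))).prod volume) := by
    rw [integral_prod _ hI2]
    simp only [hgrad]
    congr 1; ext x; congr 1; ext y; ring
  have hRr : ∫ x : EuclideanSpace ℝ (Fin N), ∫ y : EuclideanSpace ℝ (Fin N), ‖x - y‖ ^ (α - N) * w x * w y = I := by
    rw [hIdef, integral_prod _ hI1]
  rw [hL, hRr]
  have huniq' : (∫ p : EuclideanSpace ℝ (Fin N) × EuclideanSpace ℝ (Fin N), ‖p.1 - p.2‖ ^ (α - N) * D p.1 * w p.2 ∂((volume : Measure (EuclideanSpace ℝ (Fin N))).prod volume))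
      + (∫ p : EuclideanSpace ℝ (Fin N) × EuclideanSpace ℝ (Fin N), ‖p.1 - p.2‖ ^ (α - N) * w p.1 * D p.2 ∂((volume : Measure (EuclideanSpace ℝ (Fin N))).prod volume))
      = -((N : ℝ) + α) * I := huniq
  rw [hswap] at huniq'
  linarith
end
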